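/- arXiv:1101.1856 — 2 statements merged into one kernel-verified Lean document; each statement's English description precedes it below -/
import Mathlib

section
/- Every continuous image of a Peano continuum (in a Hausdorff space) is arcwise connected: if X is a compact, connected, locally connected metric space and f : X → Z is continuous with Z Hausdorff and metrizable, then any two distinct points of f(X) are joined by an arc in f(X). -/
open Set

/-!
In a complete, connected, locally connected metric space, two points are joined by paths with
small errors; refining these inside connected open sets gives a uniformly Cauchy sequence whose
limit is a genuine path.

To turn a path `γ` in a Hausdorff space into an arc, take a minimal closed set of times across the
gaps of which `γ` does not jump, and let `γ` rest on each gap. By minimality no loop is left: the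
fibres of the resulting map `g` are order-convex. A countable sum of running maxima of Urysohn
functions composed with `g` is then a monotone function with the same fibres as `g`, and
reparametrizing `g` by it makes `g` injective.
-/

section ApproximatePaths

open Filter Topology Metric

variable {X : Type*}

/-- `p` is a path from `x` to `y`, parametrized by `[s, t]` and extended by constants to `ℝ`, up to
an error `ε`: instead of being continuous, `p` maps a neighbourhood of each `u` into a *connected*
open subset of the `ε`-ball around `p u`. Connectedness is what allows `p` to be refined to an
approximate path with a smaller error. -/
structure IsApproxPath [PseudoMetricSpace X] (ε s t : ℝ) (x y : X) (p : ℝ → X) : Prop where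
  eq_left : ∀ u ≤ s, p u = x
  eq_right : ∀ u, t ≤ u → p u = y
  exists_isPreconnected : ∀ u, ∃ C, IsOpen C ∧ IsPreconnected C ∧ C ⊆ ball (p u) ε ∧
    ∀ᶠ v in 𝓝 u, p v ∈ C

lemma IsApproxPath.mono [PseudoMetricSpace X] {δ ε s t : ℝ} {x y : X} {p : ℝ → X}
    (hp : IsApproxPath δ s t x y p) (hδε : δ ≤ ε) : IsApproxPath ε s t x y p where
  eq_left := hp.eq_left
  eq_right := hp.eq_right
  exists_isPreconnected u := by
    obtain ⟨C, hCo, hC, hCδ, hpC⟩ := hp.exists_isPreconnected u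
    exact ⟨C, hCo, hC, hCδ.trans (ball_subset_ball hδε), hpC⟩

lemma IsApproxPath.trans [PseudoMetricSpace X] {ε s m t : ℝ} {x y z : X} {p q : ℝ → X}
    (hp : IsApproxPath ε s m x y p) (hq : IsApproxPath ε m t y z q) (hsm : s ≤ m) (hmt : m ≤ t) :
    IsApproxPath ε s t x z (fun u ↦ if u ≤ m then p u else q u) where
  eq_left u hu := by rw [if_pos (hu.trans hsm), hp.eq_left u hu]
  eq_right u hu := by
    split_ifs with hum
    · obtain rfl : u = m := hum.antisymm (hmt.trans hu)
      rw [hp.eq_right u le_rfl, ← hq.eq_left u le_rfl, hq.eq_right u hu]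
    · exact hq.eq_right u hu
  exists_isPreconnected u := by
    obtain ⟨C, hCo, hC, hCε, hpC⟩ := hp.exists_isPreconnected u
    obtain ⟨D, hDo, hD, hDε, hqD⟩ := hq.exists_isPreconnected u
    rcases lt_trichotomy u m with hum | rfl | hmu
    · refine ⟨C, hCo, hC, by rwa [if_pos hum.le], ?_⟩
      filter_upwards [hpC, Iio_mem_nhds hum] with v hv hvm
      rwa [if_pos (le_of_lt hvm)]
    · have hpq : p u = q u := by rw [hp.eq_right u le_rfl, hq.eq_left u le_rfl]
      refine ⟨C ∪ D, hCo.union hDo, hC.union (p u) hpC.self_of_nhds (hpq ▸ hqD.self_of_nhds) hD,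
        ?_, ?_⟩
      · rw [if_pos le_rfl]
        exact union_subset hCε (hpq ▸ hDε)
      · filter_upwards [hpC, hqD] with v hvC hvD
        split_ifs
        exacts [.inl hvC, .inr hvD]
    · refine ⟨D, hDo, hD, by rwa [if_neg hmu.not_ge], ?_⟩
      filter_upwards [hqD, Ioi_mem_nhds hmu] with v hv hmv
      rwa [if_neg (not_le_of_gt hmv)]

lemma exists_isOpen_isPreconnected_subset_ball [PseudoMetricSpace X] [LocallyConnectedSpace X]
    {U : Set X} {x : X} (hU : U ∈ 𝓝 x) {ε : ℝ} (hε : 0 < ε) :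
    ∃ V ⊆ U, IsOpen V ∧ x ∈ V ∧ IsPreconnected V ∧ ∀ y ∈ V, V ⊆ ball y ε := by
  obtain ⟨V, hVU, hVo, hxV, hV⟩ := locallyConnectedSpace_iff_subsets_isOpen_isConnected.1
    ‹LocallyConnectedSpace X› x _ (inter_mem hU (ball_mem_nhds x (half_pos hε)))
  refine ⟨V, fun z hz ↦ (hVU hz).1, hVo, hxV, hV.isPreconnected, fun y hy z hz ↦ ?_⟩
  calc
    dist z y ≤ dist z x + dist y x := dist_triangle_right z y x
    _ < ε / 2 + ε / 2 := add_lt_add (hVU hz).2 (hVU hy).2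
    _ = ε := add_halves ε

lemma isApproxPath_const [PseudoMetricSpace X] [LocallyConnectedSpace X] {ε : ℝ} (hε : 0 < ε)
    (s t : ℝ) (x : X) : IsApproxPath ε s t x x (fun _ ↦ x) where
  eq_left _ _ := rfl
  eq_right _ _ := rfl
  exists_isPreconnected _ := by
    obtain ⟨V, -, hVo, hxV, hV, hVε⟩ :=
      exists_isOpen_isPreconnected_subset_ball (x := x) univ_mem hε
    exact ⟨V, hVo, hV, hVε x hxV, .of_forall fun _ ↦ hxV⟩

lemma isApproxPath_step [PseudoMetricSpace X] {V : Set X} (hVo : IsOpen V) (hV : IsPreconnected V)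
    {ε : ℝ} (hVε : ∀ z ∈ V, V ⊆ ball z ε) {x y : X} (hx : x ∈ V) (hy : y ∈ V) {s t : ℝ}
    (hst : s < t) : IsApproxPath ε s t x y (fun u ↦ if u ≤ s then x else y) where
  eq_left _ hu := if_pos hu
  eq_right _ hu := if_neg (hst.trans_le hu).not_ge
  exists_isPreconnected u := by
    have hmem (v : ℝ) : (if v ≤ s then x else y) ∈ V := by split_ifs <;> assumption
    exact ⟨V, hVo, hV, hVε _ (hmem u), .of_forall hmem⟩

lemma exists_isApproxPath_of_isPreconnected [PseudoMetricSpace X] [LocallyConnectedSpace X]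
    {C : Set X} (hC : IsPreconnected C) (hCo : IsOpen C) {ε : ℝ} (hε : 0 < ε) {x y : X} (hx : x ∈ C)
    (hy : y ∈ C) {s t : ℝ} (hst : s < t) : ∃ p, IsApproxPath ε s t x y p ∧ ∀ u, p u ∈ C := by
  refine hC.induction₂' (fun x y ↦ ∀ s t : ℝ, s < t →
    ∃ p, IsApproxPath ε s t x y p ∧ ∀ u, p u ∈ C) ?_ ?_ hx hy s t hst
  · intro x hx
    obtain ⟨V, hVC, hVo, hxV, hV, hVε⟩ :=
      exists_isOpen_isPreconnected_subset_ball (hCo.mem_nhds hx) hε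
    filter_upwards [mem_nhdsWithin_of_mem_nhds (hVo.mem_nhds hxV)] with y hyV
    refine ⟨fun s t hst ↦ ⟨_, isApproxPath_step hVo hV hVε hxV hyV hst, fun u ↦ ?_⟩,
      fun s t hst ↦ ⟨_, isApproxPath_step hVo hV hVε hyV hxV hst, fun u ↦ ?_⟩⟩ <;>
    · split_ifs
      exacts [hVC ‹_›, hVC ‹_›]
  · intro x y z _ _ _ hxy hyz s t hst
    obtain ⟨m, hsm, hmt⟩ := exists_between hst
    obtain ⟨p, hp, hpC⟩ := hxy s m hsm
    obtain ⟨q, hq, hqC⟩ := hyz m t hmt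
    refine ⟨_, hp.trans hq hsm.le hmt.le, fun u ↦ ?_⟩
    split_ifs
    exacts [hpC u, hqC u]

/-- `q` is an approximate path on `[s, t]` with error `δ`, follows `p` up to `η` there, and agrees
with `p` at the endpoints. -/
structure IsRefinement [PseudoMetricSpace X] (δ η s t : ℝ) (p q : ℝ → X) : Prop where
  isApproxPath : IsApproxPath δ s t (p s) (p t) q
  dist_le : ∀ u ∈ Icc s t, dist (p u) (q u) ≤ η

lemma IsRefinement.trans [PseudoMetricSpace X] {δ η s m t : ℝ} {p q r : ℝ → X}
    (hq : IsRefinement δ η s m p q) (hr : IsRefinement δ η m t p r) (hsm : s ≤ m) (hmt : m ≤ t) :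
    IsRefinement δ η s t p (fun u ↦ if u ≤ m then q u else r u) where
  isApproxPath := hq.isApproxPath.trans hr.isApproxPath hsm hmt
  dist_le u hu := by
    split_ifs with hum
    · exact hq.dist_le u ⟨hu.1, hum⟩
    · exact hr.dist_le u ⟨(not_le.1 hum).le, hu.2⟩

lemma exists_isRefinement_of_mapsTo [PseudoMetricSpace X] [LocallyConnectedSpace X]
    {δ ε s t : ℝ} (hδ : 0 < δ) (hst : s ≤ t) {p : ℝ → X} {C : Set X} {z : X} (hCo : IsOpen C)
    (hC : IsPreconnected C) (hCz : C ⊆ ball z ε) (hp : MapsTo p (Icc s t) C) :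
    ∃ q, IsRefinement δ (2 * ε) s t p q := by
  have hdist {a b : X} (ha : a ∈ C) (hb : b ∈ C) : dist a b ≤ 2 * ε := by
    have hz := dist_triangle_right a b z
    have haz := mem_ball.1 (hCz ha)
    have hbz := mem_ball.1 (hCz hb)
    linarith
  rcases hst.eq_or_lt with rfl | hst
  · refine ⟨fun _ ↦ p s, isApproxPath_const hδ s s (p s), fun u hu ↦ ?_⟩
    exact hdist (hp hu) (hp (left_mem_Icc.2 le_rfl))
  · obtain ⟨q, hq, hqC⟩ := exists_isApproxPath_of_isPreconnected hC hCo hδ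
      (hp (left_mem_Icc.2 hst.le)) (hp (right_mem_Icc.2 hst.le)) hst
    exact ⟨q, hq, fun u hu ↦ hdist (hp hu) (hqC u)⟩

lemma IsApproxPath.exists_isRefinement [PseudoMetricSpace X] [LocallyConnectedSpace X]
    {ε s t : ℝ} {x y : X} {p : ℝ → X} (hp : IsApproxPath ε s t x y p) (hst : s ≤ t) {δ : ℝ}
    (hδ : 0 < δ) : ∃ q, IsRefinement δ (2 * ε) s t p q := by
  choose C hCo hC hCε hpC using hp.exists_isPreconnected
  obtain ⟨τ, hτ0, hτ, ⟨m, hm⟩, hτC⟩ := exists_monotone_Icc_subset_open_cover_Icc hst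
    (c := fun u : ℝ ↦ Subtype.val ⁻¹' interior (p ⁻¹' C u))
    (fun u ↦ isOpen_interior.preimage continuous_subtype_val)
    (fun u _ ↦ mem_iUnion.2 ⟨u, mem_interior_iff_mem_nhds.2 (hpC u)⟩)
  have hcell (n : ℕ) : ∃ q, IsRefinement δ (2 * ε) (τ n) (τ (n + 1)) p q := by
    obtain ⟨c, hc⟩ := hτC n
    refine exists_isRefinement_of_mapsTo hδ (hτ n.le_succ) (hCo c) (hC c) (hCε c) fun u hu ↦ ?_
    have hust : u ∈ Icc s t := ⟨(τ n).2.1.trans hu.1, hu.2.trans (τ (n + 1)).2.2⟩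
    have hu' : u ∈ interior (p ⁻¹' C c) := @hc ⟨u, hust⟩ hu
    exact (interior_subset hu' :)
  have hinitial (n : ℕ) : ∃ q, IsRefinement δ (2 * ε) (τ 0) (τ n) p q := by
    induction n with
    | zero =>
      refine exists_isRefinement_of_mapsTo hδ le_rfl (hCo (τ 0)) (hC _) (hCε _) fun u hu ↦ ?_
      rw [le_antisymm hu.2 hu.1]
      exact (hpC (τ 0)).self_of_nhds
    | succ n ih =>
      obtain ⟨q, hq⟩ := ih
      obtain ⟨r, hr⟩ := hcell n
      exact ⟨_, hq.trans hr (hτ n.zero_le) (hτ n.le_succ)⟩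
  simpa only [hτ0, hm m le_rfl] using hinitial m

lemma IsRefinement.dist_le_of_isApproxPath [PseudoMetricSpace X] {δ ε η s t : ℝ} {x y : X}
    {p q : ℝ → X} (hq : IsRefinement δ η s t p q) (hp : IsApproxPath ε s t x y p) (hst : s ≤ t)
    (u : ℝ) : dist (p u) (q u) ≤ η := by
  have hη : 0 ≤ η := dist_nonneg.trans (hq.dist_le s (left_mem_Icc.2 hst))
  rcases le_total u s with hus | hsu
  · rwa [hq.isApproxPath.eq_left u hus, hp.eq_left u hus, hp.eq_left s le_rfl, dist_self]
  rcases le_total t u with htu | hut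
  · rwa [hq.isApproxPath.eq_right u htu, hp.eq_right u htu, hp.eq_right t le_rfl, dist_self]
  · exact hq.dist_le u ⟨hsu, hut⟩

lemma continuous_of_forall_exists_isApproxPath [PseudoMetricSpace X] {s t : ℝ} {x y : X}
    {f : ℝ → X} (hf : ∀ ε > 0, ∃ p, IsApproxPath ε s t x y p ∧ ∀ u, dist (p u) (f u) ≤ ε) :
    Continuous f := by
  refine continuous_iff_continuousAt.2 fun u ↦ Metric.tendsto_nhds.2 fun ε hε ↦ ?_
  obtain ⟨p, hp, hpf⟩ := hf (ε / 3) (by positivity)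
  obtain ⟨C, -, -, hCε, hpC⟩ := hp.exists_isPreconnected u
  filter_upwards [hpC] with v hv
  calc
    dist (f v) (f u) ≤ dist (f v) (p v) + dist (p v) (p u) + dist (p u) (f u) := dist_triangle4 ..
    _ < ε / 3 + ε / 3 + ε / 3 := by
      rw [dist_comm (f v)]
      exact add_lt_add_of_lt_of_le (add_lt_add_of_le_of_lt (hpf v) (hCε hv)) (hpf u)
    _ = ε := by ring

lemma joined_of_forall_exists_isApproxPath [MetricSpace X] {x y : X} {f : ℝ → X}
    (hf : ∀ ε > 0, ∃ p, IsApproxPath ε 0 1 x y p ∧ ∀ u, dist (p u) (f u) ≤ ε) : Joined x y := by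
  have hf0 : f 0 = x := (eq_of_forall_dist_le fun ε hε ↦ by
    obtain ⟨p, hp, hpf⟩ := hf ε hε
    simpa only [hp.eq_left 0 le_rfl] using hpf 0).symm
  have hf1 : f 1 = y := (eq_of_forall_dist_le fun ε hε ↦ by
    obtain ⟨p, hp, hpf⟩ := hf ε hε
    simpa only [hp.eq_right 1 le_rfl] using hpf 1).symm
  exact ⟨⟨⟨fun u ↦ f u,
    (continuous_of_forall_exists_isApproxPath hf).comp continuous_subtype_val⟩, hf0, hf1⟩⟩

lemma exists_seq_isApproxPath [PseudoMetricSpace X] [PreconnectedSpace X] [LocallyConnectedSpace X]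
    (x y : X) {ε : ℕ → ℝ} (hε : ∀ n, 0 < ε n) : ∃ p : ℕ → ℝ → X,
      (∀ n, IsApproxPath (ε n) 0 1 x y (p n)) ∧ ∀ n u, dist (p n u) (p (n + 1) u) ≤ 2 * ε n := by
  have hrefine (n : ℕ) (p : ℝ → X) (hp : IsApproxPath (ε n) 0 1 x y p) :
      ∃ q, IsApproxPath (ε (n + 1)) 0 1 x y q ∧ ∀ u, dist (p u) (q u) ≤ 2 * ε n := by
    obtain ⟨q, hq⟩ := hp.exists_isRefinement zero_le_one (hε (n + 1))
    have hqxy := hq.isApproxPath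
    rw [hp.eq_left 0 le_rfl, hp.eq_right 1 le_rfl] at hqxy
    exact ⟨q, hqxy, hq.dist_le_of_isApproxPath hp zero_le_one⟩
  obtain ⟨p₀, hp₀, -⟩ := exists_isApproxPath_of_isPreconnected isPreconnected_univ isOpen_univ
    (hε 0) (mem_univ x) (mem_univ y) one_pos
  choose! next hnext hdist using hrefine
  let p (n : ℕ) : ℝ → X := Nat.rec p₀ next n
  have hp (n : ℕ) : IsApproxPath (ε n) 0 1 x y (p n) := by
    induction n with
    | zero => exact hp₀
    | succ n ih => exact hnext n _ ih
  exact ⟨p, hp, fun n ↦ hdist n _ (hp n)⟩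

theorem joined_of_locallyConnectedSpace [MetricSpace X] [CompleteSpace X] [PreconnectedSpace X]
    [LocallyConnectedSpace X] (x y : X) : Joined x y := by
  obtain ⟨p, hp, hdist⟩ := exists_seq_isApproxPath x y (ε := fun n ↦ 1 / 4 / 2 ^ n)
    fun n ↦ by positivity
  have hgeom (u : ℝ) (n : ℕ) : dist (p n u) (p (n + 1) u) ≤ 1 / 2 / 2 ^ n :=
    (hdist n u).trans_eq (by ring)
  choose f hf using fun u ↦
    cauchySeq_tendsto_of_complete (cauchySeq_of_le_geometric_two (hgeom u))
  refine joined_of_forall_exists_isApproxPath (f := f) fun ε hε ↦ ?_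
  obtain ⟨n, hn⟩ := exists_pow_lt_of_lt_one hε one_half_lt_one
  have hnε : 1 / 2 ^ n ≤ ε := by simpa only [one_div_pow] using hn.le
  refine ⟨p n, (hp n).mono (le_trans ?_ hnε), fun u ↦ ?_⟩
  · gcongr
    norm_num
  · exact (dist_le_of_le_geometric_two_of_tendsto (hgeom u) (hf u) n).trans hnε

end ApproximatePaths

section LoopErasure

open Topology Filter

variable {α Z : Type*} [LinearOrder α] [BoundedOrder α] [TopologicalSpace α] {γ : α → Z}
  {K : Set α}

/-- `K` contains both endpoints, and `γ` takes equal values at the two ends of each gap of `K`.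
Replacing `γ` by a constant on each gap thus removes loops from `γ` without creating jumps. -/
structure IsLoopErasing (γ : α → Z) (K : Set α) : Prop where
  isClosed : IsClosed K
  bot_mem : ⊥ ∈ K
  top_mem : ⊤ ∈ K
  eq_of_disjoint : ∀ u ∈ K, ∀ v ∈ K, u ≤ v → Disjoint (Ioo u v) K → γ u = γ v

lemma isLoopErasing_univ [DenselyOrdered α] (γ : α → Z) : IsLoopErasing γ univ where
  isClosed := isClosed_univ
  bot_mem := mem_univ _
  top_mem := mem_univ _
  eq_of_disjoint u _ v _ huv hgap := by
    rw [disjoint_univ, Ioo_eq_empty_iff] at hgap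
    rw [eq_of_le_of_not_lt huv hgap]

lemma IsLoopErasing.diff_Ioo [OrderClosedTopology α] (hK : IsLoopErasing γ K) {l r : α} (hl : l ∈ K)
    (hr : r ∈ K) (hlr : γ l = γ r) : IsLoopErasing γ (K \ Ioo l r) where
  isClosed := hK.isClosed.sdiff isOpen_Ioo
  bot_mem := ⟨hK.bot_mem, fun h ↦ not_lt_bot h.1⟩
  top_mem := ⟨hK.top_mem, fun h ↦ not_top_lt h.2⟩
  eq_of_disjoint u hu v hv huv hgap := by
    by_cases hK' : Disjoint (Ioo u v) K
    · exact hK.eq_of_disjoint u hu.1 v hv.1 huv hK'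
    obtain ⟨k, hkuv, hk⟩ := not_disjoint_iff.1 hK'
    have hklr : k ∈ Ioo l r := by_contra fun h ↦ disjoint_left.1 hgap hkuv ⟨hk, h⟩
    have hul : u ≤ l := not_lt.1 fun h ↦ hu.2 ⟨h, hkuv.1.trans hklr.2⟩
    have hrv : r ≤ v := not_lt.1 fun h ↦ hv.2 ⟨hklr.1.trans hkuv.2, h⟩
    have hlu : l ≤ u := not_lt.1 fun h ↦
      disjoint_left.1 hgap ⟨h, hklr.1.trans hkuv.2⟩ ⟨hl, fun h ↦ lt_irrefl l h.1⟩
    have hvr : v ≤ r := not_lt.1 fun h ↦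
      disjoint_left.1 hgap ⟨hkuv.1.trans hklr.2, h⟩ ⟨hr, fun h ↦ lt_irrefl r h.2⟩
    rw [hul.antisymm hlu, hvr.antisymm hrv, hlr]

variable [OrderTopology α] [CompactSpace α]

lemma IsLoopErasing.exists_gap (hK : IsLoopErasing γ K) {u v : α} (hu : u ∈ K) (hv : v ∈ K)
    (huv : u ≤ v) {U V : Set α} (hU : IsOpen U) (hV : IsOpen V) (hUV : Disjoint U V) (huU : u ∈ U)
    (hvV : v ∈ V) (hcover : K ∩ Icc u v ⊆ U ∪ V) : ∃ l ∈ U, ∃ r ∈ V, γ l = γ r := by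
  obtain ⟨l, ⟨⟨hlK, hul, hlv⟩, hlV⟩, hl⟩ : ∃ l, IsGreatest (K ∩ Icc u v ∩ Vᶜ) l :=
    ((hK.isClosed.inter isClosed_Icc).inter hV.isClosed_compl).isCompact.exists_isGreatest
      ⟨u, ⟨hu, left_mem_Icc.2 huv⟩, disjoint_left.1 hUV huU⟩
  have hlU : l ∈ U := (hcover ⟨hlK, hul, hlv⟩).resolve_right hlV
  obtain ⟨r, ⟨⟨hrK, hlr, hrv⟩, hrU⟩, hr⟩ : ∃ r, IsLeast (K ∩ Icc l v ∩ Uᶜ) r :=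
    ((hK.isClosed.inter isClosed_Icc).inter hU.isClosed_compl).isCompact.exists_isLeast
      ⟨v, ⟨hv, right_mem_Icc.2 hlv⟩, disjoint_right.1 hUV hvV⟩
  have hrV : r ∈ V := (hcover ⟨hrK, hul.trans hlr, hrv⟩).resolve_left hrU
  refine ⟨l, hlU, r, hrV, hK.eq_of_disjoint l hlK r hrK hlr (disjoint_left.2 fun k hk hkK ↦ ?_)⟩
  have hkv : k ≤ v := hk.2.le.trans hrv
  rcases hcover ⟨hkK, hul.trans hk.1.le, hkv⟩ with hkU | hkV
  · exact hk.1.not_ge (hl ⟨⟨hkK, hul.trans hk.1.le, hkv⟩, disjoint_left.1 hUV hkU⟩)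
  · exact hk.2.not_ge (hr ⟨⟨hkK, hk.1.le, hkv⟩, disjoint_right.1 hUV hkV⟩)

lemma isLoopErasing_sInter [TopologicalSpace Z] [T2Space Z] (hγ : Continuous γ) {c : Set (Set α)}
    (hc : ∀ K ∈ c, IsLoopErasing γ K) (hchain : IsChain (· ⊆ ·) c) (hne : c.Nonempty) :
    IsLoopErasing γ (⋂₀ c) where
  isClosed := isClosed_sInter fun K hK ↦ (hc K hK).isClosed
  bot_mem K hK := (hc K hK).bot_mem
  top_mem K hK := (hc K hK).top_mem
  eq_of_disjoint u hu v hv huv hgap := by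
    by_contra huv_ne
    obtain ⟨U, V, hU, hV, huU, hvV, hUV⟩ := t2_separation huv_ne
    have : Nonempty c := hne.to_subtype
    have hopen : IsOpen (γ ⁻¹' U ∪ γ ⁻¹' V ∪ (Icc u v)ᶜ) :=
      ((hU.preimage hγ).union (hV.preimage hγ)).union isClosed_Icc.isOpen_compl
    have hsub : ⋂₀ c ⊆ γ ⁻¹' U ∪ γ ⁻¹' V ∪ (Icc u v)ᶜ := by
      refine fun k hk ↦ or_iff_not_imp_right.2 fun hkuv ↦ ?_
      obtain ⟨huk, hkv⟩ := not_not.1 hkuv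
      rcases huk.eq_or_lt with rfl | huk
      · exact .inl huU
      rcases hkv.eq_or_lt with rfl | hkv
      · exact .inr hvV
      · exact (disjoint_left.1 hgap ⟨huk, hkv⟩ hk).elim
    obtain ⟨⟨K, hK⟩, hcover⟩ := exists_subset_nhds_of_compactSpace (V := ((↑) : c → Set α))
      (fun K K' ↦ (hchain.total K.2 K'.2).elim (⟨K, subset_rfl, ·⟩) (⟨K', ·, subset_rfl⟩))
      (fun K ↦ (hc K K.2).isClosed) fun k hk ↦ hopen.mem_nhds (hsub (sInter_eq_iInter ▸ hk))
    obtain ⟨l, hl, r, hr, hlr⟩ := (hc K hK).exists_gap (hu K hK) (hv K hK) huv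
      (hU.preimage hγ) (hV.preimage hγ) (hUV.preimage γ) huU hvV
      fun k hk ↦ (hcover hk.1).resolve_right (not_not.2 hk.2)
    exact disjoint_left.1 hUV hl (hlr ▸ hr)

lemma exists_minimal_isLoopErasing [TopologicalSpace Z] [T2Space Z] [DenselyOrdered α]
    (hγ : Continuous γ) : ∃ K, Minimal (IsLoopErasing γ) K := by
  obtain ⟨K, -, hK⟩ := zorn_superset_nonempty {K | IsLoopErasing γ K}
    (fun c hc hchain hne ↦ ⟨⋂₀ c, isLoopErasing_sInter hγ hc hchain hne,
      fun K hK ↦ sInter_subset_of_mem hK⟩) univ (isLoopErasing_univ γ)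
  exact ⟨K, hK⟩

lemma IsLoopErasing.exists_isGreatest_isLeast (hK : IsLoopErasing γ K) (t : α) :
    ∃ l r, IsGreatest (K ∩ Iic t) l ∧ IsLeast (K ∩ Ici t) r ∧ γ l = γ r := by
  obtain ⟨l, hl⟩ := (hK.isClosed.inter isClosed_Iic).isCompact.exists_isGreatest
    ⟨⊥, hK.bot_mem, bot_le (a := t)⟩
  obtain ⟨r, hr⟩ := (hK.isClosed.inter isClosed_Ici).isCompact.exists_isLeast
    ⟨⊤, hK.top_mem, le_top (a := t)⟩
  refine ⟨l, r, hl, hr, hK.eq_of_disjoint l hl.1.1 r hr.1.1 (hl.1.2.trans hr.1.2) <|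
    disjoint_left.2 fun k hk hkK ↦ ?_⟩
  rcases le_total k t with hkt | htk
  · exact hk.1.not_ge (hl.2 ⟨hkK, hkt⟩)
  · exact hk.2.not_ge (hr.2 ⟨hkK, htk⟩)

lemma IsLoopErasing.continuous_comp [TopologicalSpace Z] (hK : IsLoopErasing γ K)
    (hγ : Continuous γ) {l : α → α} (hl : ∀ t, IsGreatest (K ∩ Iic t) (l t)) :
    Continuous (γ ∘ l) := by
  refine continuous_iff_continuousAt.2 fun t ↦ ?_
  by_cases ht : t ∈ K
  · have hlt : l t = t := (hl t).unique ⟨⟨ht, le_rfl⟩, fun k hk ↦ hk.2⟩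
    refine tendsto_def.2 fun U hU ↦ ?_
    rw [Function.comp_apply, hlt] at hU
    obtain ⟨b, c, htbc, hbc, hbcU⟩ := exists_Icc_mem_subset_of_mem_nhds (hγ.continuousAt hU)
    filter_upwards [hbc] with s hs
    obtain ⟨l', r, hl', hr, hlr⟩ := hK.exists_isGreatest_isLeast s
    obtain rfl := hl'.unique (hl s)
    rcases le_total t s with hts | hst
    · exact hbcU ⟨htbc.1.trans (hl'.2 ⟨ht, hts⟩), hl'.1.2.trans hs.2⟩
    · rw [mem_preimage, Function.comp_apply, hlr]
      exact hbcU ⟨hs.1.trans hr.1.2, (hr.2 ⟨ht, hst⟩).trans htbc.2⟩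
  · obtain ⟨b, c, htbc, hbc, hbcK⟩ :=
      exists_Icc_mem_subset_of_mem_nhds (hK.isClosed.isOpen_compl.mem_nhds ht)
    refine (continuousAt_const (y := γ (l t))).congr (mem_of_superset hbc fun s hs ↦ ?_)
    have hIcc {k : α} (hk : k ∈ K) (h : k ≤ c) : k < b :=
      not_le.1 fun hbk ↦ hbcK ⟨hbk, h⟩ hk
    have hset : K ∩ Iic s = K ∩ Iic t := by
      ext k
      refine and_congr_right fun hk ↦ ⟨fun hks ↦ ?_, fun hkt ↦ ?_⟩
      · exact (hIcc hk (le_trans hks hs.2)).le.trans htbc.1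
      · exact (hIcc hk (le_trans hkt htbc.2)).le.trans hs.1
    exact congrArg γ ((hl t).unique (hset ▸ hl s))

lemma ordConnected_preimage_comp_of_minimal (hK : Minimal (IsLoopErasing γ) K) {l : α → α}
    (hl : ∀ t, IsGreatest (K ∩ Iic t) (l t)) (z : Z) : ((γ ∘ l) ⁻¹' {z}).OrdConnected := by
  refine ⟨fun s (hs : γ (l s) = z) t (ht : γ (l t) = z) w hw ↦ show γ (l w) = z from ?_⟩
  obtain ⟨l', r, hl', hr, hlr⟩ := hK.prop.exists_isGreatest_isLeast t
  obtain rfl := hl'.unique (hl t)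
  have hrz : γ r = z := hlr.symm.trans ht
  have hKsub : K ⊆ K \ Ioo (l s) r :=
    hK.le_of_le (hK.prop.diff_Ioo (hl s).1.1 hr.1.1 (hs.trans hrz.symm)) sdiff_subset
  have hsw : l s ≤ l w := (hl w).2 ⟨(hl s).1.1, (hl s).1.2.trans hw.1⟩
  have hwr : l w ≤ r := (hl w).1.2.trans (hw.2.trans hr.1.2)
  rcases hsw.eq_or_lt with h | h
  · rw [← h, hs]
  rcases hwr.eq_or_lt with h' | h'
  · rw [h', hrz]
  · exact ((hKsub (hl w).1.1).2 ⟨h, h'⟩).elim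

theorem exists_continuousMap_ordConnected_fibers [DenselyOrdered α] [TopologicalSpace Z] [T2Space Z]
    (γ : C(α, Z)) : ∃ g : C(α, Z), g ⊥ = γ ⊥ ∧ g ⊤ = γ ⊤ ∧ range g ⊆ range γ ∧
      ∀ z, (g ⁻¹' {z}).OrdConnected := by
  obtain ⟨K, hK⟩ := exists_minimal_isLoopErasing γ.continuous
  choose l _ hl using hK.prop.exists_isGreatest_isLeast
  have hl (t : α) : IsGreatest (K ∩ Iic t) (l t) := (hl t).1
  refine ⟨⟨γ ∘ l, hK.prop.continuous_comp γ.continuous hl⟩, ?_, ?_, range_comp_subset_range l γ,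
    ordConnected_preimage_comp_of_minimal hK hl⟩
  · exact congrArg γ (le_bot_iff.1 (hl ⊥).1.2)
  · exact congrArg γ (top_le_iff.1 ((hl ⊤).2 ⟨hK.prop.top_mem, le_rfl⟩))

end LoopErasure

section MonotoneParametrization

open Topology Filter

variable {α Z : Type*} [TopologicalSpace α] [LinearOrder α]

lemma exists_continuousMap_isGreatest_image_Iic [OrderTopology α] [CompactSpace α] {β : Type*}
    [ConditionallyCompleteLinearOrder β] [TopologicalSpace β] [OrderTopology β] (F : C(α, β)) :
    ∃ R : C(α, β), ∀ t, IsGreatest (F '' Iic t) (R t) := by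
  have himage (t : α) : (fun w ↦ F (min w t)) '' univ = F '' Iic t := by
    ext z
    constructor
    · rintro ⟨w, -, rfl⟩
      exact mem_image_of_mem F (min_le_right w t)
    · rintro ⟨w, hw, rfl⟩
      exact ⟨w, mem_univ w, congrArg F (min_eq_left hw)⟩
  refine ⟨⟨fun t ↦ sSup (F '' Iic t), ?_⟩, fun t ↦ ?_⟩
  · simp_rw [← himage]
    exact isCompact_univ.continuous_sSup (f := fun t w ↦ F (min w t)) (by fun_prop)
  · exact (isClosed_Iic.isCompact.image F.continuous).isGreatest_sSup (nonempty_Iic.image F)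

lemma exists_monotone_eq_iff_forall_nat {h : ℕ → C(α, ℝ)} (hmono : ∀ n, Monotone (h n))
    (hI : ∀ n t, h n t ∈ Icc (0 : ℝ) 1) :
    ∃ φ : C(α, ℝ), Monotone φ ∧ ∀ s t, φ s = φ t ↔ ∀ n, h n s = h n t := by
  have hnonneg (n : ℕ) (t : α) : 0 ≤ (1 / 2 : ℝ) ^ n * h n t :=
    mul_nonneg (by positivity) (hI n t).1
  have hle (n : ℕ) (t : α) : (1 / 2 : ℝ) ^ n * h n t ≤ (1 / 2) ^ n :=
    mul_le_of_le_one_right (by positivity) (hI n t).2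
  have hsum (t : α) : Summable fun n ↦ (1 / 2 : ℝ) ^ n * h n t :=
    summable_geometric_two.of_nonneg_of_le (hnonneg · t) (hle · t)
  have hcont : Continuous fun t ↦ ∑' n, (1 / 2 : ℝ) ^ n * h n t :=
    continuous_tsum (fun n ↦ continuous_const.mul (h n).continuous) summable_geometric_two
      fun n t ↦ by rw [Real.norm_of_nonneg (hnonneg n t)]; exact hle n t
  have hterm (n : ℕ) {s t : α} (hst : s ≤ t) : (1 / 2 : ℝ) ^ n * h n s ≤ (1 / 2) ^ n * h n t :=
    mul_le_mul_of_nonneg_left (hmono n hst) (by positivity)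
  refine ⟨⟨_, hcont⟩, fun s t hst ↦ (hsum s).tsum_le_tsum (hterm · hst) (hsum t), fun s t ↦
    ⟨fun heq n ↦ ?_, fun heq ↦ by simp [heq]⟩⟩
  wlog hst : s ≤ t generalizing s t
  · exact (this t s heq.symm (le_of_not_ge hst)).symm
  by_contra hne
  exact ((hsum s).tsum_lt_tsum (hterm · hst) (mul_lt_mul_of_pos_left
    ((hmono n hst).lt_of_ne hne) (by positivity)) (hsum t)).ne heq

lemma exists_monotone_eq_iff_forall_mem [LocallyCompactSpace α] [SecondCountableTopology α]
    {S : Set C(α, ℝ)} (hmono : ∀ h ∈ S, Monotone h) (hI : ∀ h ∈ S, ∀ t, h t ∈ Icc (0 : ℝ) 1) :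
    ∃ φ : C(α, ℝ), Monotone φ ∧ ∀ s t, φ s = φ t ↔ ∀ h ∈ S, h s = h t := by
  rcases S.eq_empty_or_nonempty with rfl | hS
  · exact ⟨0, monotone_const, by simp⟩
  have : Nonempty S := hS.to_subtype
  let h : ℕ → S := TopologicalSpace.denseSeq S
  obtain ⟨φ, hφ, hφh⟩ := exists_monotone_eq_iff_forall_nat (h := fun n ↦ h n)
    (fun n ↦ hmono _ (h n).2) (fun n ↦ hI _ (h n).2)
  refine ⟨φ, hφ, fun s t ↦ (hφh s t).trans ⟨fun hst f hf ↦ ?_, fun hst n ↦ hst _ (h n).2⟩⟩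
  have hclosed : IsClosed {f : S | f.1 s = f.1 t} := isClosed_eq (by fun_prop) (by fun_prop)
  exact (TopologicalSpace.denseRange_denseSeq S).induction_on (p := fun f : S ↦ f.1 s = f.1 t)
    ⟨f, hf⟩ hclosed hst

variable [OrderTopology α] [CompactSpace α] [TopologicalSpace Z] [T4Space Z] {g : C(α, Z)}

lemma exists_monotone_separating (hg : ∀ z, (g ⁻¹' {z}).OrdConnected) {s t : α} (hst : s < t)
    (hne : g s ≠ g t) : ∃ h : C(α, ℝ), Monotone h ∧ (∀ u, h u ∈ Icc (0 : ℝ) 1) ∧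
      (∀ u v, g u = g v → h u = h v) ∧ h s ≠ h t := by
  have hdisj : Disjoint (g '' Iic s) {g t} := by
    rw [disjoint_singleton_right]
    rintro ⟨u, hus, hut⟩
    exact hne ((hg (g t)).out hut rfl ⟨hus, hst.le⟩)
  obtain ⟨F, hF0, hF1, hFI⟩ := exists_continuous_zero_one_of_isClosed
    (isClosed_Iic.isCompact.image g.continuous).isClosed isClosed_singleton hdisj
  obtain ⟨R, hR⟩ := exists_continuousMap_isGreatest_image_Iic (F.comp g)
  have hRmono : Monotone R := fun u v huv ↦ (hR u).mono (hR v) (by gcongr)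
  refine ⟨R, hRmono, fun u ↦ ?_, fun u v huv ↦ ?_, ?_⟩
  · obtain ⟨w, -, hw⟩ := (hR u).1
    exact hw ▸ hFI (g w)
  · wlog huv' : u ≤ v generalizing u v
    · exact (this v u huv.symm (le_of_not_ge huv')).symm
    refine (hRmono huv').antisymm ?_
    obtain ⟨w, hwv, hw⟩ := (hR v).1
    rw [← hw]
    rcases le_total w u with hwu | huw
    · exact (hR u).2 ⟨w, hwu, rfl⟩
    · have hgw : g w = g u := (hg (g u)).out rfl huv.symm ⟨huw, hwv⟩
      exact (hR u).2 ⟨u, le_rfl, by simp [hgw]⟩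
  · obtain ⟨w, hws, hw⟩ := (hR s).1
    have hRs : R s = 0 := hw ▸ hF0 (mem_image_of_mem g hws)
    have hRt : 1 ≤ R t := (hR t).2 ⟨t, le_rfl, hF1 rfl⟩
    linarith

theorem exists_monotone_eq_iff [SecondCountableTopology α]
    (hg : ∀ z, (g ⁻¹' {z}).OrdConnected) :
    ∃ φ : C(α, ℝ), Monotone φ ∧ ∀ s t, φ s = φ t ↔ g s = g t := by
  obtain ⟨φ, hφ, hφS⟩ := exists_monotone_eq_iff_forall_mem
    (S := {h : C(α, ℝ) | Monotone h ∧ (∀ u, h u ∈ Icc (0 : ℝ) 1) ∧ ∀ u v, g u = g v → h u = h v})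
    (fun h hh ↦ hh.1) (fun h hh ↦ hh.2.1)
  refine ⟨φ, hφ, fun s t ↦ ⟨fun hst ↦ ?_, fun hst ↦ (hφS s t).2 fun h hh ↦ hh.2.2 s t hst⟩⟩
  wlog hle : s ≤ t generalizing s t
  · exact (this t s hst.symm (le_of_not_ge hle)).symm
  by_contra hne
  obtain ⟨h, hmono, hI, hfib, hsep⟩ :=
    exists_monotone_separating hg (hle.lt_of_ne (ne_of_apply_ne g hne)) hne
  exact hsep ((hφS s t).1 hst h ⟨hmono, hI, hfib⟩)

end MonotoneParametrization

section Arcs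

open unitInterval

lemma exists_continuousMap_surjective_eq_iff {Z : Type*} [TopologicalSpace Z] [T2Space Z]
    {g : C(I, Z)} (hg : ∀ z, (g ⁻¹' {z}).OrdConnected) (hne : g 0 ≠ g 1) :
    ∃ ψ : C(I, I), Function.Surjective ψ ∧ ψ 0 = 0 ∧ ψ 1 = 1 ∧ ∀ s t, ψ s = ψ t ↔ g s = g t := by
  have : CompactSpace (range g) := isCompact_iff_compactSpace.1 (isCompact_range g.continuous)
  let g' : C(I, range g) := ⟨rangeFactorization g, g.continuous.rangeFactorization⟩
  have hg'_eq_iff (s t : I) : g' s = g' t ↔ g s = g t := Subtype.ext_iff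
  have hg' (z : range g) : (g' ⁻¹' {z}).OrdConnected := by
    convert hg z
    ext
    exact Subtype.ext_iff
  obtain ⟨φ, hφ, hφg⟩ := exists_monotone_eq_iff hg'
  simp only [hg'_eq_iff] at hφg
  have h01 : φ 0 < φ 1 := (hφ zero_le_one).lt_of_ne ((hφg 0 1).not.2 hne)
  let ψ : C(I, I) := ⟨fun t ↦ iccHomeoI (φ 0) (φ 1) h01 ⟨φ t, hφ nonneg', hφ le_one'⟩, by fun_prop⟩
  have hψ0 : ψ 0 = 0 := by ext; simp [ψ]
  have hψ1 : ψ 1 = 1 := by ext; simp [ψ, sub_ne_zero.2 h01.ne']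
  refine ⟨ψ, fun u ↦ ?_, hψ0, hψ1, fun s t ↦ ?_⟩
  · exact intermediate_value_univ 0 1 ψ.continuous ⟨hψ0.trans_le nonneg', le_one'.trans_eq hψ1.symm⟩
  · exact ((iccHomeoI _ _ h01).injective.eq_iff.trans Subtype.mk_eq_mk).trans (hφg s t)

theorem exists_injective_path {Z : Type*} [TopologicalSpace Z] [T2Space Z] {a b : Z}
    (γ : Path a b) (hab : a ≠ b) :
    ∃ p : Path a b, Function.Injective p ∧ range p ⊆ range γ := by
  obtain ⟨g, hg0, hg1, hgγ, hg⟩ := exists_continuousMap_ordConnected_fibers γ.toContinuousMap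
  replace hg0 : g 0 = a := hg0.trans γ.source
  replace hg1 : g 1 = b := hg1.trans γ.target
  obtain ⟨ψ, hψ, hψ0, hψ1, hψg⟩ :=
    exists_continuousMap_surjective_eq_iff hg (by rwa [hg0, hg1])
  have hquot : Topology.IsQuotientMap ψ := ψ.continuous.isClosedMap.isQuotientMap ψ.continuous hψ
  have hfactors : Function.FactorsThrough g ψ := fun s t hst ↦ (hψg s t).1 hst
  let p : C(I, Z) := hquot.lift g hfactors
  have hp (t : I) : p (ψ t) = g t := DFunLike.congr_fun (hquot.lift_comp g hfactors) t
  refine ⟨⟨p, ?_, ?_⟩, ?_, ?_⟩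
  · change p 0 = a
    rw [← hψ0, hp, hg0]
  · change p 1 = b
    rw [← hψ1, hp, hg1]
  · refine hψ.forall₂.2 fun s t hst ↦ ?_
    exact (hψg s t).2 ((hp s).symm.trans (hst.trans (hp t)))
  · refine range_subset_iff.2 (hψ.forall.2 fun t ↦ ?_)
    exact hgγ ⟨t, (hp t).symm⟩

end Arcs

theorem stmt_2_general {X Z : Type*} [MetricSpace X] [CompleteSpace X] [PreconnectedSpace X]
    [LocallyConnectedSpace X] [TopologicalSpace Z] [T2Space Z] (f : X → Z) (hf : Continuous f)
    (a b : Z) (ha : a ∈ range f) (hb : b ∈ range f) (hab : a ≠ b) :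
    ∃ γ : Path a b, Function.Injective (fun t => γ t) ∧ (range fun t => γ t) ⊆ range f := by
  obtain ⟨x, rfl⟩ := ha
  obtain ⟨y, rfl⟩ := hb
  obtain ⟨p⟩ := joined_of_locallyConnectedSpace x y
  obtain ⟨q, hq, hqp⟩ := exists_injective_path (p.map hf) hab
  exact ⟨q, hq, hqp.trans (range_comp_subset_range p f)⟩

/-- A continuous Hausdorff metrizable image of a Peano continuum is arcwise connected. -/
theorem stmt_2 {X Z : Type} [MetricSpace X] [CompactSpace X] [ConnectedSpace X]
    [LocallyConnectedSpace X] [TopologicalSpace Z] [T2Space Z]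
    [TopologicalSpace.MetrizableSpace Z]
    (f : X → Z) (hf : Continuous f) (a b : Z)
    (ha : a ∈ Set.range f) (hb : b ∈ Set.range f) (hab : a ≠ b) :
    ∃ γ : Path a b, Function.Injective (fun t => γ t) ∧
      (Set.range fun t => γ t) ⊆ Set.range f := by
  exact stmt_2_general f hf a b ha hb hab
end

section
/- Let X be a compact metric space with covering dimension at least 2 that is locally connected (a Peano space). Then there exists a topological embedding of the circle S¹ into X. -/
open Set

/-- Covering dimension at most `n`. -/
def CovDimLE (X : Type*) [TopologicalSpace X] (n : ℕ) : Prop :=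
  ∀ U : Set (Set X), U.Finite → (∀ u ∈ U, IsOpen u) → ⋃₀ U = Set.univ →
    ∃ V : Set (Set X), V.Finite ∧ (∀ v ∈ V, IsOpen v) ∧ ⋃₀ V = Set.univ ∧
      (∀ v ∈ V, ∃ u ∈ U, v ⊆ u) ∧ ∀ x : X, {v ∈ V | x ∈ v}.ncard ≤ n + 1

/-!
Suppose that `X` contains no circle. Two distinct arcs with the same end points would contain a
circle, so deleting an interior point of an arc from `x` to `y` leaves no path from `x` to `y`.
Since `X` is locally path-connected, the path component of `x` in the complement of this point is an
open set whose frontier is at most that point and whose closure misses `y`. By compactness,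
intersecting finitely many such sets gives every point small neighbourhoods with finite frontier. A
finite cover by such neighbourhoods is refined by disjoint open sets covering all but the finitely
many frontier points, and disjoint neighbourhoods of these points complete a cover in which no
point lies in three sets.

Arcs are extracted from a path by restricting it to a minimal closed set of parameters on which it
has no jumps across gaps. Its image is parametrized without gaps by a Whitney map, a strictly
monotone continuous function on the compact subsets of `X`. Paths are uniform limits of chains of
small connected open sets, each chain refining the previous one.
-/

open Filter Topology unitInterval

section Gaps

variable {α : Type*} [LinearOrder α] [TopologicalSpace α] [OrderClosedTopology α]

lemma exists_gap {A B : Set α} (hA : IsCompact A) (hB : IsCompact B) (hAB : Disjoint A B)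
    {a b : α} (ha : a ∈ A) (hb : b ∈ B) (hab : a ≤ b) :
    ∃ a' ∈ A, ∃ b' ∈ B, a' < b' ∧ Disjoint (A ∪ B) (Ioo a' b') := by
  obtain ⟨b', ⟨hb'B, hab'⟩, hb'min⟩ :=
    (hB.inter_right isClosed_Ici).exists_isLeast ⟨b, hb, mem_Ici.2 hab⟩
  obtain ⟨a', ⟨ha'A, ha'b'⟩, ha'max⟩ :=
    (hA.inter_right isClosed_Iic).exists_isGreatest ⟨a, ha, mem_Iic.2 hab'⟩
  refine ⟨a', ha'A, b', hb'B, lt_of_le_of_ne ha'b' (hAB.ne_of_mem ha'A hb'B), ?_⟩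
  rw [disjoint_left]
  rintro z (hzA | hzB) ⟨ha'z, hzb'⟩
  · exact ha'z.not_ge (ha'max ⟨hzA, hzb'.le⟩)
  · exact hzb'.not_ge (hb'min ⟨hzB, (ha'max ⟨ha, hab'⟩).trans ha'z.le⟩)

-- Otherwise `s` splits `α` into two disjoint compact sets, and a gap between them violates `hφ`.
lemma Icc_subset_range_of_covBy [CompactSpace α] {δ : Type*} [LinearOrder δ] [TopologicalSpace δ]
    [OrderClosedTopology δ] {φ : α → δ} (hφc : Continuous φ) (hφ : ∀ a b, a ⋖ b → φ a = φ b)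
    {a b : α} (hab : a ≤ b) : Icc (φ a) (φ b) ⊆ range φ := by
  rintro s ⟨has, hsb⟩
  by_contra hs
  have hdisj : Disjoint (φ ⁻¹' Iic s) (φ ⁻¹' Ici s) :=
    disjoint_left.2 fun t ht ht' => hs ⟨t, le_antisymm ht ht'⟩
  obtain ⟨a', ha', b', hb', hlt, hgap⟩ := exists_gap (isClosed_Iic.preimage hφc).isCompact
    (isClosed_Ici.preimage hφc).isCompact hdisj has hsb hab
  have hcov : a' ⋖ b' := ⟨hlt, fun z hz hz' =>
    disjoint_left.1 hgap ((le_total (φ z) s).imp id id) ⟨hz, hz'⟩⟩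
  exact hdisj.ne_of_mem ha' (mem_preimage.2 (hφ a' b' hcov ▸ hb')) rfl

end Gaps

section GapCompatible

variable {α X : Type*} [LinearOrder α] [BoundedOrder α] [TopologicalSpace α]

/-- A closed set containing both end points such that `f` takes the same value at the two ends of
each of its gaps. Collapsing the gaps makes `f` on such a set a path from `f ⊥` to `f ⊤`. -/
structure IsGapCompatible (f : α → X) (C : Set α) : Prop where
  isClosed : IsClosed C
  bot_mem : ⊥ ∈ C
  top_mem : ⊤ ∈ C
  eq_of_gap : ∀ a ∈ C, ∀ b ∈ C, a < b → Disjoint C (Ioo a b) → f a = f b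

variable {f : α → X}

lemma isGapCompatible_univ [DenselyOrdered α] : IsGapCompatible f univ where
  isClosed := isClosed_univ
  bot_mem := mem_univ _
  top_mem := mem_univ _
  eq_of_gap _ _ _ _ hab h := by
    simp [Ioo_eq_empty_iff, hab] at h

variable [OrderClosedTopology α]

lemma IsGapCompatible.diff_Ioo {C : Set α} (hC : IsGapCompatible f C) {a b : α}
    (ha : a ∈ C) (hb : b ∈ C) (hfab : f a = f b) :
    IsGapCompatible f (C \ Ioo a b) where
  isClosed := hC.isClosed.sdiff isOpen_Ioo
  bot_mem := ⟨hC.bot_mem, fun h => not_lt_bot h.1⟩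
  top_mem := ⟨hC.top_mem, fun h => not_top_lt h.2⟩
  eq_of_gap c hc d hd hcd hgap := by
    by_cases hgapC : Disjoint C (Ioo c d)
    · exact hC.eq_of_gap c hc.1 d hd.1 hcd hgapC
    obtain ⟨e, heC, hce, hed⟩ := not_disjoint_iff.1 hgapC
    have not_between {t : α} (ht : t ∈ C \ Ioo a b) : ¬ (c < t ∧ t < d) := disjoint_left.1 hgap ht
    obtain ⟨hae, heb⟩ : e ∈ Ioo a b := by
      by_contra he
      exact not_between ⟨heC, he⟩ ⟨hce, hed⟩
    have hac : a = c := le_antisymm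
      (not_lt.1 fun h => not_between ⟨ha, left_notMem_Ioo⟩ ⟨h, hae.trans hed⟩)
      (not_lt.1 fun h => hc.2 ⟨h, hce.trans heb⟩)
    have hbd : b = d := le_antisymm (not_lt.1 fun h => hd.2 ⟨hae.trans hed, h⟩)
      (not_lt.1 fun h => not_between ⟨hb, right_notMem_Ioo⟩ ⟨hce.trans heb, h⟩)
    rw [← hac, ← hbd, hfab]

lemma IsGapCompatible.exists_notMem_union [CompactSpace α] [TopologicalSpace X]
    (hf : Continuous f) {C : Set α} (hC : IsGapCompatible f C) {a b : α} (ha : a ∈ C) (hb : b ∈ C)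
    (hab : a ≤ b) {U V : Set X} (hU : IsOpen U) (hV : IsOpen V) (hUV : Disjoint U V)
    (haU : f a ∈ U) (hbV : f b ∈ V) : ∃ t ∈ C ∩ Icc a b, f t ∉ U ∪ V := by
  by_contra! hcover
  have hK : IsCompact (C ∩ Icc a b) := (hC.isClosed.inter isClosed_Icc).isCompact
  obtain ⟨a', ⟨ha'K, ha'V⟩, b', ⟨hb'K, hb'U⟩, hlt, hgap⟩ :=
    exists_gap (hK.diff (hV.preimage hf)) (hK.diff (hU.preimage hf))
      (disjoint_left.2 fun t ht ht' => (hcover t ht.1).elim ht'.2 ht.2)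
      ⟨⟨ha, left_mem_Icc.2 hab⟩, disjoint_left.1 hUV haU⟩
      ⟨⟨hb, right_mem_Icc.2 hab⟩, disjoint_right.1 hUV hbV⟩ hab
  have hfeq : f a' = f b' := by
    refine hC.eq_of_gap a' ha'K.1 b' hb'K.1 hlt (disjoint_left.2 fun t htC ht => ?_)
    have htK : t ∈ C ∩ Icc a b := ⟨htC, ha'K.2.1.trans ht.1.le, ht.2.le.trans hb'K.2.2⟩
    refine disjoint_left.1 hgap ((hcover t htK).imp (fun htU => ?_) fun htV => ?_) ht
    exacts [⟨htK, disjoint_left.1 hUV htU⟩, ⟨htK, disjoint_right.1 hUV htV⟩]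
  exact hb'U (mem_preimage.2 (hfeq ▸ (hcover a' ha'K).resolve_right ha'V))

lemma IsGapCompatible.sInter_of_isChain [CompactSpace α] [TopologicalSpace X] [T2Space X]
    (hf : Continuous f) {c : Set (Set α)} (hc : ∀ C ∈ c, IsGapCompatible f C)
    (hchain : IsChain (· ⊆ ·) c) (hne : c.Nonempty) : IsGapCompatible f (⋂₀ c) where
  isClosed := isClosed_sInter fun C hC => (hc C hC).isClosed
  bot_mem := fun C hC => (hc C hC).bot_mem
  top_mem := fun C hC => (hc C hC).top_mem
  eq_of_gap a ha b hb hab hgap := by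
    by_contra hfab
    obtain ⟨U, V, hU, hV, haU, hbV, hUV⟩ := t2_separation hfab
    have hN : IsOpen (f ⁻¹' (U ∪ V) ∪ (Icc a b)ᶜ) :=
      ((hU.union hV).preimage hf).union isClosed_Icc.isOpen_compl
    have hcN : ⋂₀ c ⊆ f ⁻¹' (U ∪ V) ∪ (Icc a b)ᶜ := by
      intro t ht
      by_cases htab : t ∈ Icc a b
      · rcases eq_endpoints_or_mem_Ioo_of_mem_Icc htab with rfl | rfl | htab
        exacts [.inl (.inl haU), .inl (.inr hbV), (disjoint_left.1 hgap ht htab).elim]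
      · exact .inr htab
    have : Nonempty c := hne.to_subtype
    have hdir : Directed (· ⊇ ·) ((↑) : c → Set α) := fun A B =>
      (hchain.total A.2 B.2).elim (fun h => ⟨A, Subset.rfl, h⟩) fun h => ⟨B, h, Subset.rfl⟩
    obtain ⟨⟨C, hCc⟩, hCN⟩ := exists_subset_nhds_of_compactSpace hdir
      (fun C => (hc C C.2).isClosed) fun t ht => hN.mem_nhds (hcN (by rwa [sInter_eq_iInter]))
    obtain ⟨t, ⟨htC, htab⟩, ht⟩ :=
      (hc C hCc).exists_notMem_union hf (ha C hCc) (hb C hCc) hab.le hU hV hUV haU hbV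
    exact (hCN htC).elim ht fun h => h htab

lemma exists_minimal_isGapCompatible [CompactSpace α] [DenselyOrdered α] [TopologicalSpace X]
    [T2Space X] (hf : Continuous f) : ∃ C, Minimal (IsGapCompatible f) C := by
  obtain ⟨C, -, hC⟩ := zorn_superset_nonempty {C | IsGapCompatible f C}
    (fun c hc hchain hne => ⟨⋂₀ c, IsGapCompatible.sInter_of_isChain hf hc hchain hne,
      fun _ => sInter_subset_of_mem⟩) univ isGapCompatible_univ
  exact ⟨C, hC⟩

lemma eq_iff_disjoint_Ioo_of_minimal {C : Set α} (hC : Minimal (IsGapCompatible f) C) {a b : α}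
    (ha : a ∈ C) (hb : b ∈ C) (hab : a < b) : f a = f b ↔ Disjoint C (Ioo a b) :=
  ⟨fun h => disjoint_left.2 fun _ ht =>
    (hC.le_of_le (hC.prop.diff_Ioo ha hb h) sdiff_subset ht).2, hC.prop.eq_of_gap a ha b hb hab⟩

end GapCompatible

section WhitneyMap

open TopologicalSpace

lemma exists_infDist_lt_of_denseRange {X ι : Type*} [PseudoMetricSpace X] {u : ι → X}
    (hu : DenseRange u) {K L : Set X} (hK : IsClosed K) (hKne : K.Nonempty) {z : X} (hzK : z ∉ K)
    (hzL : z ∈ L) : ∃ i, Metric.infDist (u i) L < Metric.infDist (u i) K := by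
  have hr : 0 < Metric.infDist z K := (hK.notMem_iff_infDist_pos hKne).1 hzK
  obtain ⟨i, hi⟩ := hu.exists_dist_lt z (half_pos hr)
  have hiL : Metric.infDist (u i) L ≤ dist z (u i) :=
    dist_comm z (u i) ▸ Metric.infDist_le_dist_of_mem hzL
  have hiK : Metric.infDist z K ≤ Metric.infDist (u i) K + dist z (u i) :=
    Metric.infDist_le_infDist_add_dist
  exact ⟨i, by linarith⟩

-- A weighted sum, over a dense sequence, of decreasing functions of the distance to the given set.
lemma exists_continuous_strictMono_nonemptyCompacts (X : Type*) [MetricSpace X]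
    [SeparableSpace X] : ∃ w : NonemptyCompacts X → ℝ, Continuous w ∧ StrictMono w := by
  cases isEmpty_or_nonempty X
  · have : IsEmpty (NonemptyCompacts X) := ⟨fun K => isEmptyElim K.nonempty.some⟩
    exact ⟨0, continuous_zero, fun K => isEmptyElim K⟩
  let g (n : ℕ) (K : NonemptyCompacts X) : ℝ := (1 / 2) ^ n / (1 + Metric.infDist (denseSeq X n) K)
  have hg_pos (n) (K : NonemptyCompacts X) : 0 < 1 + Metric.infDist (denseSeq X n) K :=
    add_pos_of_pos_of_nonneg one_pos Metric.infDist_nonneg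
  have hg_bound (n K) : ‖g n K‖ ≤ (1 / 2) ^ n := by
    rw [Real.norm_of_nonneg (div_nonneg (by positivity) (hg_pos n K).le)]
    exact div_le_self (by positivity) (le_add_of_nonneg_right Metric.infDist_nonneg)
  have hg_cont (n) : Continuous (g n) := continuous_const.div
    (continuous_const.add (Metric.lipschitz_infDist_set _).continuous) fun K => (hg_pos n K).ne'
  have hg_sum (K) : Summable (g · K) := summable_geometric_two.of_norm_bounded (hg_bound · K)
  refine ⟨fun K => ∑' n, g n K, continuous_tsum hg_cont summable_geometric_two hg_bound,
    fun K L hKL => ?_⟩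
  obtain ⟨z, hzL, hzK⟩ := exists_of_ssubset (SetLike.coe_ssubset_coe.2 hKL)
  obtain ⟨n, hn⟩ := exists_infDist_lt_of_denseRange (denseRange_denseSeq X) K.isCompact.isClosed
    K.nonempty hzK hzL
  refine (hg_sum K).tsum_lt_tsum (i := n) (fun m => ?_) ?_ (hg_sum L)
  · exact div_le_div_of_nonneg_left (by positivity) (hg_pos m L)
      (add_le_add_right (Metric.infDist_le_infDist_of_subset hKL.le K.nonempty) 1)
  · exact div_lt_div_of_pos_left (by positivity) (hg_pos n L) (by gcongr)

end WhitneyMap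

section InitialSegments

open TopologicalSpace

/-- The part of a closed set `C` of the unit interval to the left of its point `t`. The space of
nonempty compact sets is needed to apply a Whitney map to images of these sets. -/
def initialSegment {C : Set I} (hC : IsClosed C) (t : C) : NonemptyCompacts I where
  carrier := C ∩ Iic (t : I)
  isCompact' := (hC.inter isClosed_Iic).isCompact
  nonempty' := ⟨t, t.2, self_mem_Iic⟩

variable {C : Set I} (hC : IsClosed C)

lemma monotone_initialSegment : Monotone (initialSegment hC) :=
  fun _ _ hst _ hu => ⟨hu.1, Iic_subset_Iic.2 (Subtype.coe_le_coe.2 hst) hu.2⟩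

lemma lipschitzWith_initialSegment : LipschitzWith 1 (initialSegment hC) := by
  refine LipschitzWith.of_dist_le_mul fun s t => ?_
  wlog hst : s ≤ t generalizing s t
  · rw [dist_comm, dist_comm s]
    exact this t s (le_of_not_ge hst)
  rw [NNReal.coe_one, one_mul]
  refine Metric.hausdorffDist_le_of_mem_dist dist_nonneg
    (fun u hu => ⟨u, monotone_initialSegment hC hst hu, by simp⟩) fun u hu => ?_
  rcases le_total u s with hus | hsu
  · exact ⟨u, ⟨hu.1, hus⟩, by simp⟩
  · exact ⟨s, ⟨s.2, self_mem_Iic⟩,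
      dist_comm u s ▸ Real.dist_left_le_of_mem_uIcc (Icc_subset_uIcc ⟨hsu, hu.2⟩)⟩

end InitialSegments

section Arcs

open TopologicalSpace

variable {X : Type*} [MetricSpace X] {f : I → X} {C : Set I}

lemma map_initialSegment_eq_iff (hf : Continuous f) (hC : Minimal (IsGapCompatible f) C) (s t : C) :
    (initialSegment hC.prop.isClosed s).map f hf = (initialSegment hC.prop.isClosed t).map f hf ↔
      f s = f t := by
  wlog hst : s ≤ t generalizing s t
  · rw [eq_comm, this t s (le_of_not_ge hst), eq_comm]
  rcases hst.eq_or_lt with rfl | hst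
  · exact iff_of_true rfl rfl
  rw [← SetLike.coe_set_eq, NonemptyCompacts.coe_map, NonemptyCompacts.coe_map]
  refine ⟨fun h => ?_, fun h => ?_⟩
  · obtain ⟨u, ⟨huC, hus⟩, hut⟩ : f t ∈ f '' initialSegment hC.prop.isClosed s :=
      h ▸ mem_image_of_mem f ⟨t.2, self_mem_Iic⟩
    have hgap := (eq_iff_disjoint_Ioo_of_minimal hC huC t.2 (lt_of_le_of_lt hus hst)).1 hut
    have hus' : u = s :=
      (hus : u ≤ s).eq_of_not_lt fun hlt => disjoint_left.1 hgap s.2 ⟨hlt, hst⟩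
    rw [← hus', hut]
  · refine (image_mono (monotone_initialSegment _ hst.le)).antisymm ?_
    rintro _ ⟨u, ⟨huC, hut⟩, rfl⟩
    rcases le_or_gt u s with hus | hsu
    · exact mem_image_of_mem f ⟨huC, hus⟩
    · have hgap := (eq_iff_disjoint_Ioo_of_minimal hC s.2 t.2 hst).1 h
      have hut' : u = t := (hut : u ≤ t).eq_of_not_lt fun hlt => disjoint_left.1 hgap huC ⟨hsu, hlt⟩
      exact ⟨s, ⟨s.2, self_mem_Iic⟩, by rw [h, hut']⟩

lemma exists_real_parametrization [SeparableSpace X] (hf : Continuous f)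
    (hC : Minimal (IsGapCompatible f) C) :
    ∃ φ : C → ℝ, Continuous φ ∧ Monotone φ ∧ ∀ s t, φ s = φ t ↔ f s = f t := by
  obtain ⟨w, hw, hw_mono⟩ := exists_continuous_strictMono_nonemptyCompacts X
  let K (t : C) := (initialSegment hC.prop.isClosed t).map f hf
  have hK : Monotone K := fun s t hst => image_mono (monotone_initialSegment _ hst)
  refine ⟨w ∘ K, hw.comp (hf.nonemptyCompacts_map.comp (lipschitzWith_initialSegment _).continuous),
    hw_mono.monotone.comp hK, fun s t => ?_⟩
  rw [← map_initialSegment_eq_iff hf hC]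
  refine ⟨fun h => ?_, fun h => congrArg w h⟩
  rcases le_total s t with hst | hts
  · exact (hK hst).eq_of_not_lt fun hlt => (hw_mono hlt).ne h
  · exact ((hK hts).eq_of_not_lt fun hlt => (hw_mono hlt).ne h.symm).symm

lemma exists_unitInterval_parametrization [SeparableSpace X] (hf : Continuous f) (hne : f 0 ≠ f 1)
    (hC : Minimal (IsGapCompatible f) C) :
    ∃ φ : C → I, Continuous φ ∧ Function.Surjective φ ∧ φ ⟨0, hC.prop.bot_mem⟩ = 0 ∧
      φ ⟨1, hC.prop.top_mem⟩ = 1 ∧ ∀ s t, φ s = φ t ↔ f s = f t := by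
  obtain ⟨φ, hφ, hφ_mono, hφ_fiber⟩ := exists_real_parametrization hf hC
  have : CompactSpace C := isCompact_iff_compactSpace.1 hC.prop.isClosed.isCompact
  let zero : C := ⟨0, hC.prop.bot_mem⟩
  let one : C := ⟨1, hC.prop.top_mem⟩
  have hlt : φ zero < φ one :=
    (hφ_mono (Subtype.coe_le_coe.1 zero_le_one)).lt_of_ne fun h => hne ((hφ_fiber _ _).1 h)
  have hmem (t : C) : φ t ∈ Icc (φ zero) (φ one) :=
    ⟨hφ_mono (Subtype.coe_le_coe.1 nonneg'), hφ_mono (Subtype.coe_le_coe.1 le_one')⟩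
  have hφ_covBy (a b : C) (hab : a ⋖ b) : φ a = φ b := by
    refine (hφ_fiber a b).2 (hC.prop.eq_of_gap a a.2 b b.2 hab.1 ?_)
    exact disjoint_left.2 fun t ht htab => hab.2 (c := ⟨t, ht⟩) htab.1 htab.2
  let e := iccHomeoI (φ zero) (φ one) hlt
  refine ⟨fun t => e ⟨φ t, hmem t⟩, e.continuous.comp (hφ.subtype_mk _), fun s => ?_, ?_, ?_,
    fun s t => ?_⟩
  · obtain ⟨t, ht⟩ := Icc_subset_range_of_covBy hφ hφ_covBy (hφ_mono.reflect_lt hlt).le (e.symm s).2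
    exact ⟨t, by simp [ht]⟩
  · ext; simp [e, zero]
  · ext; simp [e, one, (sub_pos.2 hlt).ne']
  · rw [e.injective.eq_iff, Subtype.mk_eq_mk, hφ_fiber]

theorem exists_injective_path_s3 [SeparableSpace X] {x y : X} (γ : Path x y) (hxy : x ≠ y) :
    ∃ α : Path x y, Function.Injective α ∧ range α ⊆ range γ := by
  obtain ⟨C, hC⟩ := exists_minimal_isGapCompatible γ.continuous
  have : CompactSpace C := isCompact_iff_compactSpace.1 hC.prop.isClosed.isCompact
  obtain ⟨φ, hφ, hφ_surj, hφ_zero, hφ_one, hφ_fiber⟩ :=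
    exists_unitInterval_parametrization γ.continuous (by simpa using hxy) hC
  obtain ⟨g, hg⟩ := hφ_surj.hasRightInverse
  have hγg (t : C) : γ (g (φ t)) = γ t := (hφ_fiber _ _).1 (hg _)
  have hα : Continuous fun s => γ (g s) := by
    refine (IsQuotientMap.of_surjective_continuous hφ_surj hφ).continuous_iff.2 ?_
    exact (γ.continuous.comp continuous_subtype_val).congr fun t => (hγg t).symm
  refine ⟨⟨⟨fun s => γ (g s), hα⟩, ?_, ?_⟩, fun s t hst => ?_, ?_⟩
  · change γ (g 0) = x
    rw [← hφ_zero, hγg, γ.source]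
  · change γ (g 1) = y
    rw [← hφ_one, hγg, γ.target]
  · rw [← hg s, ← hg t]
    exact (hφ_fiber _ _).2 hst
  · exact range_subset_iff.2 fun s => mem_range_self _

end Arcs

section Circles

variable {X : Type*} [TopologicalSpace X] {x y : X}

lemma exists_circle_of_injOn_loop [T2Space X] (γ : Path x x) (hγ : InjOn γ (Iio 1)) :
    ∃ f : Circle → X, IsEmbedding f := by
  have : Fact ((0 : ℝ) < 1) := ⟨one_pos⟩
  let g : AddCircle (1 : ℝ) → X := AddCircle.liftIco 1 0 γ.extend
  have hg : Continuous g := AddCircle.liftIco_zero_continuous (by simp)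
    γ.continuous_extend.continuousOn
  have hg_inj : Function.Injective g := by
    intro a b hab
    obtain ⟨s, hs, rfl⟩ := AddCircle.coe_image_Ico_eq (1 : ℝ) 0 ▸ mem_univ a
    obtain ⟨t, ht, rfl⟩ := AddCircle.coe_image_Ico_eq (1 : ℝ) 0 ▸ mem_univ b
    rw [zero_add] at hs ht
    simp only [g, AddCircle.liftIco_zero_coe_apply hs, AddCircle.liftIco_zero_coe_apply ht,
      γ.extend_apply (Ico_subset_Icc_self hs), γ.extend_apply (Ico_subset_Icc_self ht)] at hab
    exact congrArg _ (congrArg Subtype.val (hγ hs.2 ht.2 hab))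
  let e := AddCircle.homeomorphCircle (one_ne_zero (α := ℝ))
  exact ⟨g ∘ e.symm, (hg.isClosedEmbedding hg_inj).isEmbedding.comp e.symm.isEmbedding⟩

lemma exists_circle_of_disjoint_interior [T2Space X] {α : Path x y} {β : Path y x}
    (hα : Function.Injective α) (hβ : Function.Injective β)
    (hdisj : Disjoint (range α) (β '' Ioo 0 1)) : ∃ f : Circle → X, IsEmbedding f := by
  refine exists_circle_of_injOn_loop (α.trans β) fun s hs t ht hst => ?_
  have hα_ne_β {u v : I} (hu : (u : ℝ) ≤ 1 / 2) (hv : 1 / 2 < (v : ℝ)) (hv1 : v < 1) :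
      (α.trans β) u ≠ (α.trans β) v := by
    rw [Path.trans_apply, Path.trans_apply, dif_pos hu, dif_neg hv.not_ge]
    refine hdisj.ne_of_mem (mem_range_self _) (mem_image_of_mem β ⟨?_, ?_⟩)
    · exact Subtype.coe_lt_coe.1 (show (0 : ℝ) < 2 * v - 1 by linarith)
    · have : (v : ℝ) < 1 := hv1
      exact Subtype.coe_lt_coe.1 (show 2 * (v : ℝ) - 1 < 1 by linarith)
  rcases le_or_gt (s : ℝ) (1 / 2) with hs' | hs' <;> rcases le_or_gt (t : ℝ) (1 / 2) with ht' | ht'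
  · rw [Path.trans_apply, Path.trans_apply, dif_pos hs', dif_pos ht'] at hst
    have h : 2 * (s : ℝ) = 2 * t := congrArg Subtype.val (hα hst)
    exact Subtype.ext (by linarith)
  · exact (hα_ne_β hs' ht' ht hst).elim
  · exact (hα_ne_β ht' hs' hs hst.symm).elim
  · rw [Path.trans_apply, Path.trans_apply, dif_neg hs'.not_ge, dif_neg ht'.not_ge] at hst
    have h : 2 * (s : ℝ) - 1 = 2 * t - 1 := congrArg Subtype.val (hβ hst)
    exact Subtype.ext (by linarith)

lemma injective_subpath {γ : Path x y} (hγ : Function.Injective γ) {s t : I} (hst : s ≠ t) :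
    Function.Injective (γ.subpath s t) := by
  intro u v huv
  have h : Icc.convexComb s t u = Icc.convexComb s t v := hγ huv
  simp only [Subtype.ext_iff, Icc.coe_convexComb] at h ⊢
  refine mul_right_cancel₀ (sub_ne_zero.2 (Subtype.coe_ne_coe.2 hst.symm)) ?_
  linarith

lemma convexComb_mem_Ioo {a b t : I} (hab : a < b) (ht : t ∈ Ioo 0 1) :
    Icc.convexComb b a t ∈ Ioo a b := by
  have hab' : (0 : ℝ) < b - a := sub_pos.2 hab
  have ht0 : (0 : ℝ) < t := ht.1
  have ht1 : (0 : ℝ) < 1 - t := sub_pos.2 ht.2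
  constructor <;> rw [← Subtype.coe_lt_coe, Icc.coe_convexComb]
  · linarith [mul_pos ht1 hab']
  · linarith [mul_pos ht0 hab']

lemma exists_circle_of_injective_paths [T2Space X] {α β : Path x y} (hα : Function.Injective α)
    (hβ : Function.Injective β) {m : I} (hm : α m ∉ range β) :
    ∃ f : Circle → X, IsEmbedding f := by
  have hS : IsCompact (α ⁻¹' range β) :=
    ((isCompact_range β.continuous).isClosed.preimage α.continuous).isCompact
  obtain ⟨a, ⟨⟨c, hc⟩, -⟩, b, ⟨⟨d, hd⟩, -⟩, hab, hgap⟩ :=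
    exists_gap (hS.inter_right (isClosed_Iic (a := m))) (hS.inter_right (isClosed_Ici (a := m)))
      (disjoint_left.2 fun t ht ht' => hm (le_antisymm (mem_Iic.1 ht.2) ht'.2 ▸ ht.1))
      ⟨⟨0, by simp⟩, nonneg'⟩ ⟨⟨1, by simp⟩, le_one'⟩ zero_le_one
  have hcd : c ≠ d := fun h => hab.ne (hα (by rw [← hc, ← hd, h]))
  refine exists_circle_of_disjoint_interior (α := (β.subpath c d).cast hc.symm hd.symm)
    (injective_subpath hβ hcd) (injective_subpath hα hab.ne') (disjoint_left.2 ?_)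
  rintro _ ⟨u, rfl⟩ ⟨t, ht, htu⟩
  have hz := convexComb_mem_Ioo hab ht
  have hzS : Icc.convexComb b a t ∈ α ⁻¹' range β := ⟨Icc.convexComb c d u, htu.symm⟩
  rw [← inter_union_distrib_left, Iic_union_Ici, inter_univ] at hgap
  exact disjoint_left.1 hgap hzS hz

end Circles

section StepPaths

variable {X : Type*}

/-- `IsStepPath r a b f` means that `f : ℝ → X` is a step function from `a` to `b` whose jumps are
related by `r`. It is built from single jumps by concatenation at time `1 / 2`, so that refining
every jump of a step path refines the step path at the same times. -/
inductive IsStepPath (r : X → X → Prop) : X → X → (ℝ → X) → Prop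
  | jump {a b : X} (h : r a b) : IsStepPath r a b fun t => if t < 1 then a else b
  | trans {a b c : X} {f g : ℝ → X} (hf : IsStepPath r a b f) (hg : IsStepPath r b c g) :
    IsStepPath r a c fun t => if t ≤ 1 / 2 then f (2 * t) else g (2 * t - 1)

variable {r : X → X → Prop} {a b : X} {f : ℝ → X}

lemma IsStepPath.eq_left (hf : IsStepPath r a b f) {t : ℝ} (ht : t ≤ 0) : f t = a := by
  induction hf generalizing t with
  | jump => exact if_pos (by linarith)
  | trans _ _ ihf _ => exact (if_pos (by linarith)).trans (ihf (by linarith))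

lemma IsStepPath.eq_right (hf : IsStepPath r a b f) {t : ℝ} (ht : 1 ≤ t) : f t = b := by
  induction hf generalizing t with
  | jump => exact if_neg ht.not_gt
  | trans _ _ _ ihg => exact (if_neg (by linarith)).trans (ihg (by linarith))

variable [PseudoMetricSpace X]

lemma IsStepPath.eventually_dist_le {ε : ℝ} (hr : ∀ a b, r a b → dist a b ≤ ε)
    (hf : IsStepPath r a b f) (t : ℝ) : ∀ᶠ s in 𝓝 t, dist (f s) (f t) ≤ ε := by
  induction hf generalizing t with
  | @jump a b h =>
    have hε : 0 ≤ ε := dist_nonneg.trans (hr a b h)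
    have hba : dist b a ≤ ε := dist_comm b a ▸ hr a b h
    refine Eventually.of_forall fun s => ?_
    dsimp only
    split_ifs <;> simp [hε, hr a b h, hba]
  | @trans a b c f g hf hg ihf ihg =>
    have hf_ev : ∀ᶠ s in 𝓝 t, dist (f (2 * s)) (f (2 * t)) ≤ ε :=
      ((continuous_const_mul 2).tendsto t).eventually (ihf (2 * t))
    have hg_ev : ∀ᶠ s in 𝓝 t, dist (g (2 * s - 1)) (g (2 * t - 1)) ≤ ε :=
      (((continuous_const_mul 2).sub continuous_const).tendsto t).eventually (ihg (2 * t - 1))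
    rcases lt_trichotomy t (1 / 2) with ht | rfl | ht
    · filter_upwards [hf_ev, eventually_lt_nhds ht] with s hs hst
      rwa [if_pos hst.le, if_pos ht.le]
    · have hfg : f (2 * (1 / 2)) = g (2 * (1 / 2) - 1) := by
        rw [hf.eq_right (by norm_num), hg.eq_left (by norm_num)]
      filter_upwards [hf_ev, hg_ev] with s hfs hgs
      rw [if_pos le_rfl]
      split_ifs
      exacts [hfs, hfg ▸ hgs]
    · filter_upwards [hg_ev, eventually_gt_nhds ht] with s hs hst
      rwa [if_neg hst.not_ge, if_neg ht.not_ge]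

lemma IsStepPath.exists_refinement {r' : X → X → Prop} {ε : ℝ}
    (h : ∀ a b, r a b → ∃ g, IsStepPath r' a b g ∧ ∀ t, dist a (g t) ≤ ε ∧ dist b (g t) ≤ ε)
    (hf : IsStepPath r a b f) : ∃ g, IsStepPath r' a b g ∧ ∀ t, dist (f t) (g t) ≤ ε := by
  induction hf with
  | @jump a b hab =>
    obtain ⟨g, hg, hgε⟩ := h a b hab
    exact ⟨g, hg, fun t => by dsimp only; split_ifs; exacts [(hgε t).1, (hgε t).2]⟩
  | trans _ _ ihf ihg =>
    obtain ⟨f', hf', hff'⟩ := ihf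
    obtain ⟨g', hg', hgg'⟩ := ihg
    exact ⟨_, hf'.trans hg', fun t => by dsimp only; split_ifs; exacts [hff' _, hgg' _]⟩

lemma continuous_of_approx {α : Type*} [TopologicalSpace α] {f : α → X}
    (h : ∀ ε > 0, ∃ F : α → X, (∀ t, dist (F t) (f t) ≤ ε) ∧
      ∀ t, ∀ᶠ s in 𝓝 t, dist (F s) (F t) ≤ ε) : Continuous f := by
  refine continuous_iff_continuousAt.2 fun t => Metric.tendsto_nhds.2 fun ε hε => ?_
  obtain ⟨F, hFf, hF⟩ := h (ε / 4) (by positivity)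
  filter_upwards [hF t] with s hs
  linarith [dist_triangle4 (f s) (F s) (F t) (f t), dist_comm (f s) (F s), hFf s, hFf t]

end StepPaths

section LocallyConnected

variable {X : Type*} [PseudoMetricSpace X]

/-- The points `a` and `b` lie in a common connected open set, any two points of which are at
distance at most `ε`. -/
def ConnectedWithin (ε : ℝ) (a b : X) : Prop :=
  ∃ W : Set X, IsOpen W ∧ IsPreconnected W ∧ a ∈ W ∧ b ∈ W ∧ ∀ u ∈ W, ∀ v ∈ W, dist u v ≤ ε

lemma ConnectedWithin.dist_le {ε : ℝ} {a b : X} (h : ConnectedWithin ε a b) : dist a b ≤ ε := by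
  obtain ⟨W, -, -, ha, hb, hW⟩ := h
  exact hW a ha b hb

lemma ConnectedWithin.symm {ε : ℝ} {a b : X} (h : ConnectedWithin ε a b) :
    ConnectedWithin ε b a := by
  obtain ⟨W, hW_open, hW_conn, ha, hb, hW⟩ := h
  exact ⟨W, hW_open, hW_conn, hb, ha, hW⟩

variable [LocallyConnectedSpace X]

lemma eventually_connectedWithin {ε : ℝ} (hε : 0 < ε) (a : X) :
    ∀ᶠ b in 𝓝 a, ConnectedWithin ε a b := by
  obtain ⟨W, hW, hWo, haW, hWc⟩ := locallyConnectedSpace_iff_subsets_isOpen_isConnected.1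
    ‹_› a (Metric.ball a (ε / 2)) (Metric.ball_mem_nhds a (by positivity))
  filter_upwards [hWo.mem_nhds haW] with b hb
  refine ⟨W, hWo, hWc.isPreconnected, haW, hb, fun u hu v hv => ?_⟩
  linarith [dist_triangle u a v, Metric.mem_ball.1 (hW hu), Metric.mem_ball'.1 (hW hv)]

lemma exists_isStepPath_of_isPreconnected {W : Set X} (hW : IsPreconnected W) {δ : ℝ} (hδ : 0 < δ)
    {a b : X} (ha : a ∈ W) (hb : b ∈ W) :
    ∃ f, IsStepPath (ConnectedWithin δ) a b f ∧ ∀ t, f t ∈ W := by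
  refine hW.induction₂' (fun u v => ∃ f, IsStepPath (ConnectedWithin δ) u v f ∧ ∀ t, f t ∈ W)
    (fun u hu => ?_) (fun u v w _ _ _ => ?_) ha hb
  · filter_upwards [self_mem_nhdsWithin, mem_nhdsWithin_of_mem_nhds
      (eventually_connectedWithin hδ u)] with v hv huv
    exact ⟨⟨_, .jump huv, fun t => by split_ifs <;> assumption⟩,
      ⟨_, .jump huv.symm, fun t => by split_ifs <;> assumption⟩⟩
  · rintro ⟨f, hf, hfW⟩ ⟨g, hg, hgW⟩
    exact ⟨_, hf.trans hg, fun t => by split_ifs; exacts [hfW _, hgW _]⟩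

lemma IsStepPath.exists_connectedWithin_refinement {ε δ : ℝ} (hδ : 0 < δ) {a b : X} {f : ℝ → X}
    (hf : IsStepPath (ConnectedWithin ε) a b f) :
    ∃ g, IsStepPath (ConnectedWithin δ) a b g ∧ ∀ t, dist (f t) (g t) ≤ ε := by
  refine hf.exists_refinement fun u v ⟨W, _, hW_conn, hu, hv, hW⟩ => ?_
  obtain ⟨g, hg, hgW⟩ := exists_isStepPath_of_isPreconnected hW_conn hδ hu hv
  exact ⟨g, hg, fun t => ⟨hW u hu _ (hgW t), hW v hv _ (hgW t)⟩⟩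

lemma IsStepPath.exists_seq_refinement {ε : ℝ} (hε : 0 < ε) {x y : X} {f : ℝ → X}
    (hf : IsStepPath (ConnectedWithin ε) x y f) :
    ∃ F : ℕ → ℝ → X, F 0 = f ∧ (∀ n, IsStepPath (ConnectedWithin (ε / 2 ^ n)) x y (F n)) ∧
      ∀ n t, dist (F n t) (F (n + 1) t) ≤ ε / 2 ^ n := by
  let StepPath (n : ℕ) := {g : ℝ → X // IsStepPath (ConnectedWithin (ε / 2 ^ n)) x y g}
  have hrefine (n : ℕ) (g : StepPath n) :
      ∃ g' : StepPath (n + 1), ∀ t, dist (g.1 t) (g'.1 t) ≤ ε / 2 ^ n := by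
    obtain ⟨g', hg', hgg'⟩ :=
      g.2.exists_connectedWithin_refinement (δ := ε / 2 ^ (n + 1)) (by positivity)
    exact ⟨⟨g', hg'⟩, hgg'⟩
  choose next hnext using hrefine
  let F (n : ℕ) : StepPath n := Nat.rec ⟨f, by simpa using hf⟩ next n
  exact ⟨fun n => (F n).1, rfl, fun n => (F n).2, fun n t => hnext n (F n) t⟩

end LocallyConnected

section LocallyPathConnected

variable {X : Type*} [MetricSpace X] [CompleteSpace X] [LocallyConnectedSpace X]

lemma IsStepPath.exists_path {ε : ℝ} (hε : 0 < ε) {x y : X} {f : ℝ → X}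
    (hf : IsStepPath (ConnectedWithin ε) x y f) :
    ∃ γ : Path x y, ∀ t : I, dist (f t) (γ t) ≤ 2 * ε := by
  obtain ⟨F, rfl, hF, hFF⟩ := hf.exists_seq_refinement hε
  have hgeom (t : ℝ) (n : ℕ) : dist (F n t) (F (n + 1) t) ≤ 2 * ε / 2 / 2 ^ n := by
    simpa using hFF n t
  choose g hg using fun t =>
    cauchySeq_tendsto_of_complete (cauchySeq_of_le_geometric_two (hgeom t))
  have hFg (t : ℝ) (n : ℕ) : dist (F n t) (g t) ≤ 2 * ε / 2 ^ n :=
    dist_le_of_le_geometric_two_of_tendsto (hgeom t) (hg t) n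
  have hg_cont : Continuous g := by
    refine continuous_of_approx fun η hη => ?_
    have hlim : Tendsto (fun n : ℕ => 2 * ε / 2 ^ n) atTop (𝓝 0) :=
      tendsto_const_nhds.div_atTop (tendsto_pow_atTop_atTop_of_one_lt one_lt_two)
    obtain ⟨n, hn⟩ := (hlim.eventually (eventually_le_nhds hη)).exists
    refine ⟨F n, fun t => (hFg t n).trans hn, (hF n).eventually_dist_le fun u v huv => ?_⟩
    refine (huv.dist_le.trans ?_).trans hn
    gcongr
    linarith
  have hg_zero : g 0 = x :=
    tendsto_nhds_unique (hg 0) (tendsto_const_nhds.congr fun n => ((hF n).eq_left le_rfl).symm)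
  have hg_one : g 1 = y :=
    tendsto_nhds_unique (hg 1) (tendsto_const_nhds.congr fun n => ((hF n).eq_right le_rfl).symm)
  exact ⟨⟨⟨fun t => g t, by fun_prop⟩, by simpa using hg_zero, by simpa using hg_one⟩,
    fun t => by simpa using hFg t 0⟩

lemma ConnectedWithin.exists_path {ε : ℝ} (hε : 0 < ε) {x y : X} (h : ConnectedWithin ε x y) :
    ∃ γ : Path x y, ∀ t, dist (γ t) x ≤ 3 * ε := by
  obtain ⟨γ, hγ⟩ := (IsStepPath.jump h).exists_path hε
  refine ⟨γ, fun t => ?_⟩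
  have hjump : dist (if (t : ℝ) < 1 then x else y) x ≤ ε := by
    split_ifs
    exacts [(dist_self x).trans_le hε.le, dist_comm y x ▸ h.dist_le]
  linarith [dist_triangle_left (γ t) x (if (t : ℝ) < 1 then x else y), hγ t]

theorem locallyPathConnectedSpace_of_complete : LocallyPathConnectedSpace X := by
  rw [locallyPathConnectedSpace_iff_pathComponentIn_mem_nhds]
  intro x u hu hxu
  obtain ⟨ε, hε, hball⟩ := Metric.isOpen_iff.1 hu x hxu
  filter_upwards [eventually_connectedWithin (ε := ε / 4) (by positivity) x] with y hy
  obtain ⟨γ, hγ⟩ := hy.exists_path (by positivity)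
  exact ⟨γ, fun t => hball (Metric.mem_ball.2 ((hγ t).trans_lt (by linarith)))⟩

end LocallyPathConnected

section RimFinite

/-- A space is rim-finite if every point has arbitrarily small open neighbourhoods with finite
frontier. -/
def RimFinite (X : Type*) [TopologicalSpace X] : Prop :=
  ∀ x : X, ∀ u ∈ 𝓝 x, ∃ A ⊆ u, IsOpen A ∧ x ∈ A ∧ (frontier A).Finite

variable {X : Type*} [TopologicalSpace X]

lemma rimFinite_of_forall_ne [CompactSpace X]
    (hsep : ∀ x y : X, x ≠ y → ∃ A, IsOpen A ∧ x ∈ A ∧ y ∉ closure A ∧ (frontier A).Finite) :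
    RimFinite X := by
  intro x u hu
  obtain ⟨v, hvu, hv_open, hxv⟩ := mem_nhds_iff.1 hu
  suffices ∃ A : Set X, Disjoint A vᶜ ∧ IsOpen A ∧ x ∈ A ∧ (frontier A).Finite by
    obtain ⟨A, hAv, hA⟩ := this
    exact ⟨A, (disjoint_compl_right_iff_subset.1 hAv).trans hvu, hA⟩
  refine hv_open.isClosed_compl.isCompact.induction_on
    (p := fun S => ∃ A : Set X, Disjoint A S ∧ IsOpen A ∧ x ∈ A ∧ (frontier A).Finite)
    ⟨univ, by simp⟩ ?mono ?union ?nhds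
  case mono => exact fun S T hST ⟨A, hAT, hA⟩ => ⟨A, hAT.mono_right hST, hA⟩
  case union =>
    rintro S T ⟨A, hAS, hA, hxA, hA_fin⟩ ⟨B, hBT, hB, hxB, hB_fin⟩
    refine ⟨A ∩ B, disjoint_union_right.2
      ⟨hAS.mono_left inter_subset_left, hBT.mono_left inter_subset_right⟩,
      hA.inter hB, ⟨hxA, hxB⟩, (hA_fin.union hB_fin).subset ?_⟩
    exact (frontier_inter_subset A B).trans
      (union_subset_union inter_subset_left inter_subset_right)
  case nhds =>
    intro y hy
    obtain ⟨A, hA, hxA, hyA, hA_fin⟩ := hsep x y (by rintro rfl; exact hy hxv)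
    exact ⟨(closure A)ᶜ, mem_nhdsWithin_of_mem_nhds (isClosed_closure.compl_mem_nhds hyA),
      A, disjoint_compl_right.mono_left subset_closure, hA, hxA, hA_fin⟩

lemma exists_pairwise_disjoint_isOpen_subset {ι : Type*} [Finite ι] {V : ι → Set X}
    (hV : ∀ i, IsOpen (V i)) :
    ∃ W : ι → Set X, (∀ i, IsOpen (W i)) ∧ (∀ i, W i ⊆ V i) ∧
      Pairwise (Function.onFun Disjoint W) ∧
      ⋃ i, V i ⊆ (⋃ i, W i) ∪ ⋃ i, frontier (V i) := by
  obtain ⟨_, _⟩ := exists_wellFoundedLT ι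
  refine ⟨fun i => V i \ ⋃ j ∈ Iio i, closure (V j),
    fun i => (hV i).sdiff ((toFinite _).isClosed_biUnion fun _ _ => isClosed_closure),
    fun i => sdiff_subset, ?_, ?_⟩
  · refine (pairwise_disjoint_on _).2 fun i j hij => ?_
    exact disjoint_left.2 fun z hzi hzj => hzj.2 (mem_biUnion hij (subset_closure hzi.1))
  · intro z hz
    obtain ⟨i, hzi, hmin⟩ := wellFounded_lt.has_min {i | z ∈ V i} (mem_iUnion.1 hz)
    by_cases hz_prev : z ∈ ⋃ j ∈ Iio i, closure (V j)
    · obtain ⟨j, hji, hzj⟩ := mem_iUnion₂.1 hz_prev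
      exact Or.inr (mem_iUnion.2 ⟨j, (hV j).frontier_eq ▸ ⟨hzj, fun h => hmin j h hji⟩⟩)
    · exact Or.inl (mem_iUnion.2 ⟨i, hzi, hz_prev⟩)

lemma ncard_sep_image_le_one {ι α : Type*} {s : Set ι} {f : ι → Set α}
    (hf : s.PairwiseDisjoint f) (x : α) : {v ∈ f '' s | x ∈ v}.ncard ≤ 1 := by
  have hsub : {v ∈ f '' s | x ∈ v}.Subsingleton := by
    rintro _ ⟨⟨i, hi, rfl⟩, hxi⟩ _ ⟨⟨j, hj, rfl⟩, hxj⟩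
    rw [hf.elim_set hi hj x hxi hxj]
  exact (ncard_le_one hsub.finite).2 hsub

theorem RimFinite.covDimLE_one [CompactSpace X] [T2Space X] (hX : RimFinite X) :
    CovDimLE X 1 := by
  intro U _ hU_open hU_cover
  choose u huU hxu using fun x => mem_sUnion.1 (hU_cover.ge (mem_univ x))
  have hu_nhds (x : X) : u x ∈ 𝓝 x := (hU_open _ (huU x)).mem_nhds (hxu x)
  choose A hAu hA_open hxA hA_fin using fun x => hX x (u x) (hu_nhds x)
  obtain ⟨t, ht⟩ := isCompact_univ.elim_finite_subcover A hA_open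
    fun x _ => mem_iUnion.2 ⟨x, hxA x⟩
  obtain ⟨W, hW_open, hWA, hW_disj, hW_cover⟩ :=
    exists_pairwise_disjoint_isOpen_subset fun x : t => hA_open x
  let P : Set X := ⋃ x : t, frontier (A x)
  have hP_fin : P.Finite := finite_iUnion fun x => hA_fin x
  obtain ⟨O, hO, hO_disj⟩ := hP_fin.t2_separation
  refine ⟨W '' univ ∪ (fun p => O p ∩ u p) '' P, (finite_univ.image W).union (hP_fin.image _),
    ?_, eq_univ_of_forall fun x => ?_, ?_, fun x => ?_⟩
  · rintro _ (⟨i, -, rfl⟩ | ⟨p, -, rfl⟩)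
    exacts [hW_open i, (hO p).2.inter (hU_open _ (huU p))]
  · have hx : x ∈ ⋃ i : t, A i := by simpa using ht (mem_univ x)
    rcases hW_cover hx with hxW | hxP
    · obtain ⟨i, hxi⟩ := mem_iUnion.1 hxW
      exact ⟨W i, Or.inl (mem_image_of_mem W (mem_univ i)), hxi⟩
    · exact ⟨O x ∩ u x, Or.inr (mem_image_of_mem _ hxP), (hO x).1, hxu x⟩
  · rintro _ (⟨i, -, rfl⟩ | ⟨p, -, rfl⟩)
    exacts [⟨u i, huU i, (hWA i).trans (hAu i)⟩, ⟨u p, huU p, inter_subset_right⟩]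
  · simp only [mem_union, sep_union]
    refine (ncard_union_le _ _).trans (add_le_add ?_ ?_)
    · exact ncard_sep_image_le_one (hW_disj.set_pairwise _) x
    · exact ncard_sep_image_le_one (hO_disj.mono fun _ => inter_subset_left) x

end RimFinite

section PathComponents

variable {X : Type*} [TopologicalSpace X] [LocallyPathConnectedSpace X]

lemma disjoint_frontier_pathComponentIn {U : Set X} (hU : IsOpen U) (x : X) :
    Disjoint (frontier (pathComponentIn U x)) U := by
  refine disjoint_left.2 fun z hz hzU => ?_
  rw [(hU.pathComponentIn x).frontier_eq] at hz
  obtain ⟨w, hwz, hwx⟩ := mem_closure_iff.1 hz.1 _ (hU.pathComponentIn z)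
    (mem_pathComponentIn_self hzU)
  refine hz.2 ?_
  rw [← pathComponentIn_congr hwx, pathComponentIn_congr hwz]
  exact mem_pathComponentIn_self hzU

lemma exists_isOpen_finite_frontier_of_not_joinedIn [T1Space X] {F : Set X}
    (hF : F.Finite) {x y : X} (hx : x ∉ F) (hy : y ∉ F) (hxy : ¬ JoinedIn Fᶜ x y) :
    ∃ A, IsOpen A ∧ x ∈ A ∧ y ∉ closure A ∧ (frontier A).Finite := by
  have hF_open : IsOpen Fᶜ := hF.isClosed.isOpen_compl
  have hfrontier : frontier (pathComponentIn Fᶜ x) ⊆ F :=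
    disjoint_compl_right_iff_subset.1 (disjoint_frontier_pathComponentIn hF_open x)
  refine ⟨pathComponentIn Fᶜ x, hF_open.pathComponentIn x, mem_pathComponentIn_self hx, ?_,
    hF.subset hfrontier⟩
  rw [closure_eq_self_union_frontier]
  exact fun h => h.elim hxy fun h => hy (hfrontier h)

end PathComponents

section NoCircle

variable {X : Type*} [MetricSpace X]

lemma exists_finite_not_joinedIn_compl [TopologicalSpace.SeparableSpace X]
    (hno : ¬ ∃ f : Circle → X, IsEmbedding f) {x y : X} (hxy : x ≠ y) :
    ∃ F : Set X, F.Finite ∧ x ∉ F ∧ y ∉ F ∧ ¬ JoinedIn Fᶜ x y := by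
  by_cases hjoined : Joined x y
  · obtain ⟨α, hα, -⟩ := exists_injective_path_s3 hjoined.somePath hxy
    obtain ⟨m, hm_pos, hm_lt⟩ := exists_between (zero_lt_one (α := I))
    refine ⟨{α m}, finite_singleton _, fun hx => hm_pos.ne (hα (α.source.trans hx)),
      fun hy => hm_lt.ne' (hα (α.target.trans hy)), fun ⟨γ, hγ⟩ => ?_⟩
    obtain ⟨β, hβ, hβγ⟩ := exists_injective_path_s3 γ hxy
    refine hno (exists_circle_of_injective_paths hα hβ (m := m) fun hm => ?_)
    obtain ⟨t, ht⟩ := hβγ hm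
    exact hγ t ht
  · exact ⟨∅, finite_empty, notMem_empty x, notMem_empty y, fun h => hjoined h.joined⟩

theorem rimFinite_of_no_circle [CompactSpace X] [LocallyConnectedSpace X]
    (hno : ¬ ∃ f : Circle → X, IsEmbedding f) : RimFinite X := by
  have := locallyPathConnectedSpace_of_complete (X := X)
  refine rimFinite_of_forall_ne fun x y hxy => ?_
  obtain ⟨F, hF, hx, hy, hxy_sep⟩ := exists_finite_not_joinedIn_compl hno hxy
  exact exists_isOpen_finite_frontier_of_not_joinedIn hF hx hy hxy_sep

end NoCircle

/-- A compact, locally connected metric space of covering dimension at least two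
contains a topologically embedded circle. -/
theorem stmt_3 {X : Type} [MetricSpace X] [CompactSpace X] [LocallyConnectedSpace X]
    (hdim : ¬ CovDimLE X 1) :
    ∃ f : Circle → X, Continuous f ∧ Topology.IsEmbedding f := by
  by_contra hno
  exact hdim (rimFinite_of_no_circle fun ⟨f, hf⟩ => hno ⟨f, hf.continuous, hf⟩).covDimLE_one
end
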